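/- arXiv:2404.00259 — 2 statements merged into one kernel-verified Lean document; each statement's English description precedes it below -/
import Mathlib

section
/- Let M be a von Neumann algebra on H, let G be a countable family of pairwise commuting projections in M, and let Z be a countable family of projections in the centre Z(M) with 1 ∈ Z. Let A = C*(G ∪ Z) and B = C*(Z) be the unital C*-subalgebras of M generated by G ∪ Z and by Z, respectively. Then there exists a sequence (ψ_k)_{k∈ℕ} of unital *-homomorphisms ψ_k : A → Z(M) such that: (i) ψ_k(b) = b for every b ∈ B and every k; (ii) for every nonzero a ∈ A there exists k with ψ_k(a) ≠ 0; (iii) for every p ∈ G, p ≤ ⋁_{k∈ℕ} ψ_k(p), where ⋁_{k∈ℕ} ψ_k(p) is the supremum of the pairwise commuting central projections ψ_k(p), i.e., the strong-operator limit of the increasing sequence of finite suprema ⋁_{k≤m} ψ_k(p). -/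
open ContinuousLinearMap Filter Topology

noncomputable section

namespace VNA

variable {H : Type*} [NormedAddCommGroup H] [InnerProductSpace ℂ H] [CompleteSpace H]

/-- A projection (orthogonal projection): idempotent and self-adjoint. -/
def IsProjection (p : H →L[ℂ] H) : Prop := p * p = p ∧ star p = p

/-- Murray–von Neumann equivalence of `p` and `q` relative to `M`. -/
def MvNE (M : VonNeumannAlgebra H) (p q : H →L[ℂ] H) : Prop :=
  ∃ v ∈ M, star v * v = p ∧ v * star v = q

/-- `p` is a finite projection of `M`; for projections, `q ≤ p` is the range
containment `p * q = q`. -/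
def IsFiniteProjection (M : VonNeumannAlgebra H) (p : H →L[ℂ] H) : Prop :=
  p ∈ M ∧ IsProjection p ∧
    ∀ q, q ∈ M → IsProjection q → p * q = q → MvNE M q p → q = p

def IsInfiniteProjection (M : VonNeumannAlgebra H) (p : H →L[ℂ] H) : Prop :=
  p ∈ M ∧ IsProjection p ∧ ¬ IsFiniteProjection M p

/-- The centre `Z(M) = M ∩ M'` as a set. -/
def centerSet (M : VonNeumannAlgebra H) : Set (H →L[ℂ] H) :=
  {z | z ∈ M ∧ ∀ y ∈ M, z * y = y * z}

def IsCentralProjection (M : VonNeumannAlgebra H) (z : H →L[ℂ] H) : Prop :=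
  IsProjection z ∧ z ∈ centerSet M

def IsProperlyInfiniteProjection (M : VonNeumannAlgebra H) (p : H →L[ℂ] H) : Prop :=
  p ∈ M ∧ IsProjection p ∧
    ∀ z, IsCentralProjection M z → z * p ≠ 0 → IsInfiniteProjection M (z * p)

def ProperlyInfinite (M : VonNeumannAlgebra H) : Prop :=
  IsProperlyInfiniteProjection M 1

/-- `M` is σ-finite: every family of pairwise orthogonal nonzero projections in `M`
is countable. -/
def SigmaFinite (M : VonNeumannAlgebra H) : Prop :=
  ∀ S : Set (H →L[ℂ] H), (∀ p ∈ S, p ∈ M ∧ IsProjection p ∧ p ≠ 0) →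
    (∀ p ∈ S, ∀ q ∈ S, p ≠ q → p * q = 0) → S.Countable

/-- A faithful normal semifinite trace on `M`. -/
structure IsFNSTrace (M : VonNeumannAlgebra H) (τ : (H →L[ℂ] H) → ENNReal) : Prop where
  map_zero : τ 0 = 0
  additive : ∀ x y : H →L[ℂ] H, x ∈ M → y ∈ M → 0 ≤ x → 0 ≤ y → τ (x + y) = τ x + τ y
  homogeneous : ∀ (c : ℝ) (x : H →L[ℂ] H), 0 ≤ c → x ∈ M → 0 ≤ x →
    τ (c • x) = ENNReal.ofReal c * τ x
  tracial : ∀ x : H →L[ℂ] H, x ∈ M → τ (star x * x) = τ (x * star x)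
  faithful : ∀ x : H →L[ℂ] H, x ∈ M → 0 ≤ x → τ x = 0 → x = 0
  normal : ∀ (ι : Type*) [Preorder ι] [IsDirected ι (· ≤ ·)] [Nonempty ι]
      (f : ι → (H →L[ℂ] H)) (x : H →L[ℂ] H),
      (∀ i, f i ∈ M) → (∀ i, 0 ≤ f i) → Monotone f → (∃ C : ℝ, ∀ i, ‖f i‖ ≤ C) →
      x ∈ M → IsLUB (Set.range f) x → τ x = ⨆ i, τ (f i)
  semifinite : ∀ x : H →L[ℂ] H, x ∈ M → 0 ≤ x → x ≠ 0 →
      ∃ y, y ∈ M ∧ 0 ≤ y ∧ y ≤ x ∧ y ≠ 0 ∧ τ y < ⊤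

/-- `p` is a `τ`-finite projection of `M`. -/
def IsTauFiniteProjection (M : VonNeumannAlgebra H) (τ : (H →L[ℂ] H) → ENNReal)
    (p : H →L[ℂ] H) : Prop :=
  p ∈ M ∧ IsProjection p ∧ τ p < ⊤

/-- `F₁⁺(M) = {x ∈ M : 0 ≤ x ≤ 1, px = x for some τ-finite projection p}`. -/
def F1plus (M : VonNeumannAlgebra H) (τ : (H →L[ℂ] H) → ENNReal) : Set (H →L[ℂ] H) :=
  {x | x ∈ M ∧ 0 ≤ x ∧ x ≤ 1 ∧ ∃ p, IsTauFiniteProjection M τ p ∧ p * x = x}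

/-- `K(M,τ)`: operator-norm closure of the τ-finitely supported elements of `M`. -/
def Kideal (M : VonNeumannAlgebra H) (τ : (H →L[ℂ] H) → ENNReal) : Set (H →L[ℂ] H) :=
  closure {x | x ∈ M ∧ ∃ p, IsTauFiniteProjection M τ p ∧ p * x = x}

/-- A commuting self-adjoint `n`-tuple in `M`. -/
def IsCommutingSelfAdjointTuple (M : VonNeumannAlgebra H) {n : ℕ}
    (α : Fin n → (H →L[ℂ] H)) : Prop :=
  (∀ j, α j ∈ M) ∧ (∀ j, star (α j) = α j) ∧ ∀ i j, α i * α j = α j * α i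

/-- `‖[r,α]‖ = max_{1≤j≤n} ‖[r, α(j)]‖`. -/
def commNorm {n : ℕ} (α : Fin n → (H →L[ℂ] H)) (r : H →L[ℂ] H) : ℝ :=
  ⨆ j, ‖r * α j - α j * r‖

/-- `WZ*(S)`: the double commutant in `B(H)` of `S ∪ Z(M)`. -/
def WZstar (M : VonNeumannAlgebra H) (S : Set (H →L[ℂ] H)) : Set (H →L[ℂ] H) :=
  Set.centralizer (Set.centralizer (S ∪ centerSet M))

/-- A diagonal operator of `M`: `d = Σ_k λ_k p_k` with pairwise orthogonal
projections `p_k ∈ M`, the series converging in the strong operator topology. -/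
def IsDiagonal (M : VonNeumannAlgebra H) (d : H →L[ℂ] H) : Prop :=
  ∃ (p : ℕ → H →L[ℂ] H) (lam : ℕ → ℂ),
    (∀ k, p k ∈ M) ∧ (∀ k, IsProjection (p k)) ∧
    (∀ k l, k ≠ l → p k * p l = 0) ∧
    ∀ ξ : H, HasSum (fun k => lam k • (p k ξ)) (d ξ)

end VNA

namespace VNA

variable {H : Type*} [NormedAddCommGroup H] [InnerProductSpace ℂ H] [CompleteSpace H]

/-- The unital C*-subalgebra of `B(H)` generated by a set `S`. -/
def CstarGen (S : Set (H →L[ℂ] H)) : StarSubalgebra ℂ (H →L[ℂ] H) :=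
  (StarAlgebra.adjoin ℂ S).topologicalClosure

/-- Finite suprema `⋁_{k ≤ m} f k` of a sequence of pairwise commuting projections,
using `e ∨ f = e + f - e f`. -/
def projSupSeq (f : ℕ → (H →L[ℂ] H)) : ℕ → (H →L[ℂ] H)
  | 0 => f 0
  | m + 1 => projSupSeq f m + f (m + 1) - projSupSeq f m * f (m + 1)

end VNA

/-!
Let `D` be the C*-algebra generated by `G` and the whole centre `Z(M)`; it contains `A`.
Restriction of characters is a continuous surjection `π` from the spectrum of `D` onto that of
`Z(M)`, and the latter is extremally disconnected because every set of operators has a central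
support. By Gleason's theorem, compact extremally disconnected spaces are projective, so `π` has a
continuous section, which is by Gelfand duality a *-homomorphism `ψ : D → Z(M)` fixing `Z(M)`. If
`q ∈ D` is a projection with central support `c`, then `π` remains onto when restricted to the
closed set of characters with `φ q = φ c`, so the section can be chosen such that `ψ q = c ≥ q`.

Let now `q` run over the countably many finite products of the `p` and `1 - p` with `p ∈ G`. Given
an element `a` of the *-algebra generated by `G` and `Z(M)` and a character `φ` of `D`, some such
`q` satisfies `φ q = 1` and `a q = z q` with `z` central. As `q ≤ ψ q`, the map `ψ` belonging to
`q` satisfies `ψ(a) q = z q = a q` and hence `φ (ψ(a)) = φ a`. By density the countably many `ψ`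
separate the elements of `D`.
-/

namespace VNA

section CommCStarAlgebra

open WeakDual WeakDual.CharacterSpace

universe u

variable {A B D : Type u} [CommCStarAlgebra A] [CommCStarAlgebra B] [CommCStarAlgebra D]

theorem eq_of_forall_character {a b : A} (h : ∀ φ : characterSpace ℂ A, φ a = φ b) : a = b :=
  (gelfandStarTransform A).injective (ContinuousMap.ext h)

theorem exists_character_ne_zero {a : A} (ha : a ≠ 0) : ∃ φ : characterSpace ℂ A, φ a ≠ 0 := by
  by_contra! h
  exact ha (eq_of_forall_character fun φ ↦ by rw [h φ, map_zero])

theorem exists_eqOn_zero_of_isClosed_of_notMem {F : Set (characterSpace ℂ A)} (hF : IsClosed F)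
    {χ : characterSpace ℂ A} (hχ : χ ∉ F) : ∃ a : A, (∀ φ ∈ F, φ a = 0) ∧ χ a = 1 := by
  obtain ⟨f, hfF, hfχ, -⟩ := exists_continuous_zero_one_of_isClosed hF isClosed_singleton
    (Set.disjoint_singleton_right.2 hχ)
  obtain ⟨a, ha⟩ := (gelfandStarTransform A).surjective <|
    ContinuousMap.comp ⟨_, Complex.continuous_ofReal⟩ f
  have apply_eq (φ : characterSpace ℂ A) : φ a = (f φ : ℂ) := congr($ha φ)
  exact ⟨a, fun φ hφ ↦ by simp [apply_eq, hfF hφ], by simp [apply_eq, hfχ rfl]⟩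

theorem isClosed_setOf_character_eq (a b : A) :
    IsClosed {φ : characterSpace ℂ A | φ a = φ b} :=
  isClosed_eq (gelfandTransform ℂ A a).continuous (gelfandTransform ℂ A b).continuous

theorem character_eq_zero_or_one (φ : characterSpace ℂ A) {q : A} (hq : IsIdempotentElem q) :
    φ q = 0 ∨ φ q = 1 :=
  IsIdempotentElem.iff_eq_zero_or_one.1 (hq.map φ)

/-- `c : B` is the support of `S ⊆ D` in `B`: it acts as the identity on `S`, and it is annihilated
by everything in `B` that annihilates `S`. Such a `c` is automatically a projection. -/
structure IsSupport (ι : B →⋆ₐ[ℂ] D) (S : Set D) (c : B) : Prop where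
  map_mul_eq_self : ∀ s ∈ S, ι c * s = s
  mul_eq_zero : ∀ z, (∀ s ∈ S, ι z * s = 0) → z * c = 0

theorem IsSupport.isIdempotentElem {ι : B →⋆ₐ[ℂ] D} {S : Set D} {c : B} (hc : IsSupport ι S c) :
    IsIdempotentElem c := by
  have h : (1 - c) * c = 0 := hc.mul_eq_zero _ fun s hs ↦ by
    rw [map_sub, map_one, sub_mul, one_mul, hc.map_mul_eq_self s hs, sub_self]
  exact (sub_eq_zero.1 (by rw [← h]; ring)).symm

theorem IsSupport.of_image {ι : B →⋆ₐ[ℂ] D} (hι : Function.Injective ι) {S : Set B} {c : B}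
    (hc : IsSupport ι (ι '' S) c) : IsSupport (.id ℂ B) S c where
  map_mul_eq_self s hs := hι <| (map_mul ι c s).trans <|
    hc.map_mul_eq_self _ (Set.mem_image_of_mem ι hs)
  mul_eq_zero z hz := hc.mul_eq_zero z <| Set.forall_mem_image.2 fun s hs ↦ by
    rw [← map_mul, ← map_zero ι]
    exact congrArg ι (hz s hs)

theorem extremallyDisconnected_characterSpace
    (hsupp : ∀ S : Set A, ∃ c, IsSupport (.id ℂ A) S c) :
    ExtremallyDisconnected (characterSpace ℂ A) := by
  refine ⟨fun U hU ↦ ?_⟩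
  let I : Set A := {z | ∀ φ ∉ U, φ z = 0}
  obtain ⟨c, hc⟩ := hsupp I
  have U_subset : U ⊆ {χ | χ c = 1} := fun χ hχ ↦ by
    obtain ⟨z, hzU, hzχ⟩ :=
      exists_eqOn_zero_of_isClosed_of_notMem hU.isClosed_compl (not_not.2 hχ)
    have hcz : c * z = z := hc.map_mul_eq_self z hzU
    simpa [hzχ] using congr(χ $hcz)
  have closure_eq : closure U = {χ | χ c ≠ 0} := by
    refine Set.Subset.antisymm (fun χ hχ ↦ ?_) fun χ hχ ↦ by_contra fun hχU ↦ hχ ?_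
    · have : χ c = χ 1 := closure_minimal (fun φ hφ ↦ (U_subset hφ).trans (map_one φ).symm)
        (isClosed_setOf_character_eq c 1) hχ
      simp [this]
    · obtain ⟨w, hwU, hwχ⟩ := exists_eqOn_zero_of_isClosed_of_notMem isClosed_closure hχU
      have hwc : w * c = 0 := hc.mul_eq_zero w fun z hz ↦ eq_of_forall_character fun φ ↦ by
        by_cases hφ : φ ∈ U
        · simp [hwU φ (subset_closure hφ)]
        · simp [hz φ hφ]
      simpa [hwχ] using congr(χ $hwc)
  rw [closure_eq]
  exact isOpen_ne_fun (gelfandTransform ℂ A c).continuous continuous_const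

theorem surjOn_compContinuousMap {ι : B →⋆ₐ[ℂ] D} (hι : Function.Injective ι) {q : D} {c : B}
    (hq : IsIdempotentElem q) (hc : IsSupport ι {q} c) :
    Set.SurjOn (compContinuousMap ι) {φ | φ q = φ (ι c)} Set.univ := by
  have hcq : ι c * q = q := hc.map_mul_eq_self q rfl
  have isClosed_image : IsClosed (compContinuousMap ι '' {φ | φ q = φ (ι c)}) :=
    ((isClosed_setOf_character_eq q (ι c)).isCompact.image
      (compContinuousMap ι).continuous).isClosed
  intro χ _
  by_contra hχ
  obtain ⟨z, hz, hzχ⟩ := exists_eqOn_zero_of_isClosed_of_notMem isClosed_image hχ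
  have apply_eq_zero {φ : characterSpace ℂ D} (hφ : φ q = φ (ι c)) : φ (ι z) = 0 :=
    hz _ (Set.mem_image_of_mem _ hφ)
  have hzc : z * c = 0 := hc.mul_eq_zero z fun s hs ↦ by
    rw [Set.mem_singleton_iff.1 hs]
    refine eq_of_forall_character fun φ ↦ ?_
    obtain h | h := character_eq_zero_or_one φ hq
    · simp [h]
    · have : φ (ι c) = 1 := by simpa [h] using congr(φ $hcq)
      simp [apply_eq_zero (h.trans this.symm)]
  have hzc' : z * (1 - c) = 0 := hι <| eq_of_forall_character fun φ ↦ by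
    obtain h | h := character_eq_zero_or_one φ (hc.isIdempotentElem.map ι)
    · have : φ q = 0 := by simpa [h] using congr(φ $hcq).symm
      simp [apply_eq_zero (this.trans h.symm)]
    · simp [h]
  have hz0 : z = 0 := by linear_combination hzc + hzc'
  simp [hz0] at hzχ

theorem exists_retraction {ι : B →⋆ₐ[ℂ] D} (hι : Function.Injective ι)
    (hsupp : ∀ S : Set D, ∃ c, IsSupport ι S c) {q : D} (hq : IsIdempotentElem q) :
    ∃ ψ : D →⋆ₐ[ℂ] B, (∀ b, ψ (ι b) = b) ∧ ι (ψ q) * q = q := by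
  obtain ⟨c, hc⟩ := hsupp {q}
  let Y : Set (characterSpace ℂ D) := {φ | φ q = φ (ι c)}
  let π : Y → characterSpace ℂ B := fun φ ↦ compContinuousMap ι φ
  have : CompactSpace Y := isCompact_iff_compactSpace.1
    (isClosed_setOf_character_eq q (ι c)).isCompact
  have := extremallyDisconnected_characterSpace fun S : Set B ↦
    (hsupp (ι '' S)).imp fun _ hc ↦ hc.of_image hι
  have hπ : Function.Surjective π := fun χ ↦ by
    obtain ⟨φ, hφ, rfl⟩ := surjOn_compContinuousMap hι hq hc (Set.mem_univ χ)
    exact ⟨⟨φ, hφ⟩, rfl⟩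
  obtain ⟨s, hs, hπs⟩ := CompactT2.ExtremallyDisconnected.projective
    (A := characterSpace ℂ B) continuous_id
    ((compContinuousMap ι).continuous.comp continuous_subtype_val : Continuous π) hπ
  let σ : C(characterSpace ℂ B, characterSpace ℂ D) := ⟨fun χ ↦ s χ, by fun_prop⟩
  let ψ : D →⋆ₐ[ℂ] B := ((gelfandStarTransform B).symm : _ →⋆ₐ[ℂ] B).comp
    ((σ.compStarAlgHom' ℂ ℂ).comp (gelfandStarTransform D : D →⋆ₐ[ℂ] _))
  have apply_ψ (χ : characterSpace ℂ B) (d : D) : χ (ψ d) = σ χ d :=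
    congr($((gelfandStarTransform B).apply_symm_apply ((gelfandStarTransform D d).comp σ)) χ)
  have σ_ι (χ : characterSpace ℂ B) (b : B) : σ χ (ι b) = χ b := congr($hπs χ b)
  refine ⟨ψ, fun b ↦ eq_of_forall_character fun χ ↦ by rw [apply_ψ, σ_ι], ?_⟩
  have hψq : ψ q = c := eq_of_forall_character fun χ ↦ by
    rw [apply_ψ, ← σ_ι]
    exact (s χ).2
  rw [hψq, hc.map_mul_eq_self q rfl]

/-- The finite products of elements of `P` and of complements `1 - p` of elements of `P`: the atoms
of the finite Boolean algebras generated by `P` are among them. -/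
def cylinders {R : Type*} [Ring R] (P : Set R) : Submonoid R :=
  Submonoid.closure (P ∪ (1 - ·) '' P)

theorem countable_cylinders {R : Type*} [Ring R] {P : Set R} (hP : P.Countable) :
    (cylinders P : Set R).Countable := by
  have : Countable ↥(P ∪ (1 - ·) '' P) := (hP.union (hP.image _)).to_subtype
  rw [cylinders, Submonoid.closure_eq_mrange]
  exact Set.countable_range _

theorem isStarProjection_of_mem_cylinders {R : Type*} [CommRing R] [StarRing R] {P : Set R}
    (hP : ∀ p ∈ P, IsStarProjection p) {q : R} (hq : q ∈ cylinders P) : IsStarProjection q := by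
  induction hq using Submonoid.closure_induction with
  | mem q hq =>
    obtain hq | ⟨p, hp, rfl⟩ := hq
    exacts [hP q hq, (hP p hp).one_sub]
  | one => exact .one R
  | mul q r _ _ hq hr => exact hq.mul hr (Commute.all q r)

theorem exists_mem_cylinders_mul_eq {ι : B →⋆ₐ[ℂ] D} {P : Set D}
    (hP : ∀ p ∈ P, IsStarProjection p) (φ : characterSpace ℂ D) {a : D}
    (ha : a ∈ StarAlgebra.adjoin ℂ (P ∪ Set.range ι)) :
    ∃ q ∈ cylinders P, φ q = 1 ∧ ∃ b, a * q = ι b * q := by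
  induction ha using StarAlgebra.adjoin_induction with
  | mem a ha =>
    obtain ha | ⟨b, rfl⟩ := ha
    · obtain h | h := character_eq_zero_or_one φ (hP a ha).isIdempotentElem
      · exact ⟨1 - a, Submonoid.subset_closure (.inr ⟨a, ha, rfl⟩), by simp [h], 0, by
          simp [mul_sub, (hP a ha).isIdempotentElem.eq]⟩
      · exact ⟨a, Submonoid.subset_closure (.inl ha), h, 1, by
          simp [(hP a ha).isIdempotentElem.eq]⟩
    · exact ⟨1, one_mem _, map_one φ, b, rfl⟩
  | algebraMap r => exact ⟨1, one_mem _, map_one φ, algebraMap ℂ B r, by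
      simp [AlgHomClass.commutes ι]⟩
  | add a a' _ _ ha ha' =>
    obtain ⟨q, hq, hφq, b, hb⟩ := ha
    obtain ⟨q', hq', hφq', b', hb'⟩ := ha'
    refine ⟨q * q', mul_mem hq hq', by simp [hφq, hφq'], b + b', ?_⟩
    rw [map_add]
    linear_combination q' * hb + q * hb'
  | mul a a' _ _ ha ha' =>
    obtain ⟨q, hq, hφq, b, hb⟩ := ha
    obtain ⟨q', hq', hφq', b', hb'⟩ := ha'
    refine ⟨q * q', mul_mem hq hq', by simp [hφq, hφq'], b * b', ?_⟩
    rw [map_mul]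
    linear_combination a' * q' * hb + ι b * q * hb'
  | star a _ ha =>
    obtain ⟨q, hq, hφq, b, hb⟩ := ha
    refine ⟨q, hq, hφq, star b, ?_⟩
    have hq' : star q = q := (isStarProjection_of_mem_cylinders hP hq).isSelfAdjoint
    simpa [hq', map_star, mul_comm] using congr(star $hb)

theorem exists_mem_cylinders_apply_ne_zero {ι : B →⋆ₐ[ℂ] D} {P : Set D}
    (hP : ∀ p ∈ P, IsStarProjection p)
    (hdense : Dense (StarAlgebra.adjoin ℂ (P ∪ Set.range ι) : Set D)) {a : D} (ha : a ≠ 0) :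
    ∃ q ∈ cylinders P, ∀ ψ : D →⋆ₐ[ℂ] B, (∀ b, ψ (ι b) = b) → ι (ψ q) * q = q → ψ a ≠ 0 := by
  obtain ⟨φ, hφ⟩ := exists_character_ne_zero ha
  obtain ⟨a', ha', hdist⟩ := hdense.exists_dist_lt a (half_pos (norm_pos_iff.2 hφ))
  obtain ⟨q, hq, hφq, b, hb⟩ := exists_mem_cylinders_mul_eq hP φ ha'
  refine ⟨q, hq, fun ψ hψι hψq hψa ↦ ?_⟩
  have mul_eq : ι (ψ a') * q = a' * q := by
    have : ψ a' * ψ q = b * ψ q := by rw [← map_mul, hb, map_mul, hψι]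
    have : ι (ψ a') * ι (ψ q) = ι b * ι (ψ q) := by rw [← map_mul, this, map_mul]
    linear_combination q * this + (ι b - ι (ψ a')) * hψq - hb
  have φ_eq : φ (ι (ψ a')) = φ a' := by simpa [hφq] using congr(φ $mul_eq)
  have norm_le : ‖φ a'‖ ≤ ‖a - a'‖ := calc
    ‖φ a'‖ = ‖φ (ι (ψ (a - a')))‖ := by simp [hψa, φ_eq]
    _ ≤ ‖a - a'‖ := NonUnitalStarAlgHom.norm_apply_le
      ((φ : D →⋆ₐ[ℂ] ℂ).comp (ι.comp ψ)) (a - a')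
  have norm_sub_le : ‖φ a - φ a'‖ ≤ ‖a - a'‖ := by
    rw [← map_sub]
    exact NonUnitalStarAlgHom.norm_apply_le φ (a - a')
  rw [dist_eq_norm] at hdist
  linarith [norm_sub_norm_le (φ a) (φ a')]

theorem exists_separating_retractions {ι : B →⋆ₐ[ℂ] D} (hι : Function.Injective ι)
    (hsupp : ∀ S : Set D, ∃ c, IsSupport ι S c) {P : Set D} (hPc : P.Countable)
    (hP : ∀ p ∈ P, IsStarProjection p)
    (hdense : Dense (StarAlgebra.adjoin ℂ (P ∪ Set.range ι) : Set D)) :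
    ∃ ψ : ℕ → D →⋆ₐ[ℂ] B, (∀ k b, ψ k (ι b) = b) ∧ (∀ a ≠ 0, ∃ k, ψ k a ≠ 0) ∧
      ∀ p ∈ P, ∃ k, ι (ψ k p) * p = p := by
  obtain ⟨q, hq⟩ := (countable_cylinders hPc).exists_eq_range ⟨1, one_mem _⟩
  have mem_iff (x : D) : x ∈ cylinders P ↔ ∃ k, q k = x := Set.ext_iff.1 hq x
  choose ψ hψι hψq using fun k ↦ exists_retraction hι hsupp <|
    (isStarProjection_of_mem_cylinders hP ((mem_iff (q k)).2 ⟨k, rfl⟩)).isIdempotentElem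
  refine ⟨ψ, hψι, fun a ha ↦ ?_, fun p hp ↦ ?_⟩
  · obtain ⟨_, hx, hxa⟩ := exists_mem_cylinders_apply_ne_zero hP hdense ha
    obtain ⟨k, rfl⟩ := (mem_iff _).1 hx
    exact ⟨k, hxa (ψ k) (hψι k) (hψq k)⟩
  · obtain ⟨k, rfl⟩ := (mem_iff p).1 (Submonoid.subset_closure (.inl hp))
    exact ⟨k, hψq k⟩

end CommCStarAlgebra

section VonNeumannAlgebra

variable {H : Type*} [NormedAddCommGroup H] [InnerProductSpace ℂ H] [CompleteSpace H]

theorem isProjection_iff_isStarProjection {p : H →L[ℂ] H} :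
    IsProjection p ↔ IsStarProjection p :=
  (isStarProjection_iff p).symm

theorem isStarProjection_coe_iff {A : StarSubalgebra ℂ (H →L[ℂ] H)} {p : A} :
    IsStarProjection (p : H →L[ℂ] H) ↔ IsStarProjection p := by
  simp only [isStarProjection_iff', Subtype.ext_iff, MulMemClass.coe_mul, StarMemClass.coe_star]

/-- The centre of `M` as a *-subalgebra of `B(H)`; its underlying set is `centerSet M`. -/
def center (M : VonNeumannAlgebra H) : StarSubalgebra ℂ (H →L[ℂ] H) :=
  M.toStarSubalgebra ⊓ M.commutant.toStarSubalgebra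

theorem mem_center_iff {M : VonNeumannAlgebra H} {z : H →L[ℂ] H} :
    z ∈ center M ↔ z ∈ M ∧ z ∈ M.commutant :=
  Iff.rfl

theorem mem_center_iff_mem_centerSet {M : VonNeumannAlgebra H} {z : H →L[ℂ] H} :
    z ∈ center M ↔ z ∈ centerSet M := by
  rw [mem_center_iff, VonNeumannAlgebra.mem_commutant_iff]
  exact and_congr_right fun _ ↦ forall₂_congr fun _ _ ↦ eq_comm

theorem isClosed_vonNeumannAlgebra (M : VonNeumannAlgebra H) :
    IsClosed (M : Set (H →L[ℂ] H)) := by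
  rw [← M.centralizer_centralizer]
  exact Set.isClosed_centralizer _

theorem isClosed_center (M : VonNeumannAlgebra H) : IsClosed (center M : Set (H →L[ℂ] H)) :=
  (isClosed_vonNeumannAlgebra M).inter (isClosed_vonNeumannAlgebra M.commutant)

theorem mul_comm_of_mem_center {M : VonNeumannAlgebra H} {z x : H →L[ℂ] H} (hz : z ∈ center M)
    (hx : x ∈ M) : z * x = x * z :=
  (mem_center_iff_mem_centerSet.1 hz).2 x hx

instance (M : VonNeumannAlgebra H) : CommCStarAlgebra (center M) where
  toCStarAlgebra := StarSubalgebra.cstarAlgebra _ (h_closed := isClosed_center M)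
  mul_comm a b := Subtype.ext (mul_comm_of_mem_center a.2 b.2.1)

theorem exists_central_support (M : VonNeumannAlgebra H) (S : Set (H →L[ℂ] H)) :
    ∃ c ∈ center M, (∀ s ∈ S, c * s = s) ∧
      ∀ z ∈ center M, (∀ s ∈ S, z * s = 0) → z * c = 0 := by
  let K : Submodule ℂ H := ⨅ z ∈ {z ∈ center M | ∀ s ∈ S, z * s = 0}, z.ker
  have mem_K {ξ : H} : ξ ∈ K ↔ ∀ z ∈ center M, (∀ s ∈ S, z * s = 0) → z ξ = 0 := by
    simp [K, Submodule.mem_iInf]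
  have isClosed_K : IsClosed (K : Set H) := by
    simp only [K, Submodule.coe_iInf]
    exact isClosed_biInter fun z _ ↦ z.isClosed_ker
  have : CompleteSpace K := isClosed_K.completeSpace_coe
  have mem_of_commute (N : VonNeumannAlgebra H)
      (hN : ∀ z ∈ center M, ∀ y ∈ N.commutant, z * y = y * z) : K.starProjection ∈ N := by
    rw [VonNeumannAlgebra.IsStarProjection.mem_iff isStarProjection_starProjection]
    intro y hy
    rw [Submodule.range_starProjection]
    refine fun ξ hξ ↦ mem_K.2 fun z hz hzS ↦ ?_
    have : z (y ξ) = y (z ξ) := congr($(hN z hz y hy) ξ)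
    simp [this, mem_K.1 hξ z hz hzS]
  refine ⟨K.starProjection, mem_center_iff.2 ⟨mem_of_commute M fun z hz y hy ↦ ?_,
    mem_of_commute M.commutant fun z hz y hy ↦ ?_⟩, fun s hs ↦ ?_, fun z hz hzS ↦ ?_⟩
  · exact VonNeumannAlgebra.mem_commutant_iff.1 hy z hz.1
  · exact mul_comm_of_mem_center hz (M.commutant_commutant ▸ hy)
  · ext ξ
    exact Submodule.starProjection_eq_self_iff.2
      (mem_K.2 fun z _ hzS ↦ congr($(hzS s hs) ξ))
  · ext ξ
    exact mem_K.1 (K.starProjection_apply_mem ξ) z hz hzS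

theorem subset_cstarGen (S : Set (H →L[ℂ] H)) : S ⊆ CstarGen S :=
  (StarAlgebra.subset_adjoin ℂ S).trans (StarSubalgebra.le_topologicalClosure _)

theorem cstarGen_le {S : Set (H →L[ℂ] H)} {A : StarSubalgebra ℂ (H →L[ℂ] H)}
    (hA : IsClosed (A : Set (H →L[ℂ] H))) (hS : S ⊆ A) : CstarGen S ≤ A :=
  StarSubalgebra.topologicalClosure_minimal (StarAlgebra.adjoin_le hS) hA

theorem cstarGen_mono {S T : Set (H →L[ℂ] H)} (h : S ⊆ T) : CstarGen S ≤ CstarGen T :=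
  StarSubalgebra.topologicalClosure_mono (StarAlgebra.adjoin_mono h)

theorem dense_adjoin_preimage_cstarGen (S : Set (H →L[ℂ] H)) :
    Dense (StarAlgebra.adjoin ℂ ((↑) ⁻¹' S : Set (CstarGen S)) : Set (CstarGen S)) := by
  intro x
  have map_adjoin : (StarAlgebra.adjoin ℂ ((↑) ⁻¹' S : Set (CstarGen S))).map
      (CstarGen S).subtype = StarAlgebra.adjoin ℂ S := by
    rw [StarAlgHom.map_adjoin]
    congr 1
    exact (Subtype.image_preimage_coe _ _).trans (Set.inter_eq_right.2 (subset_cstarGen S))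
  rw [closure_subtype]
  have : ((↑) '' (StarAlgebra.adjoin ℂ ((↑) ⁻¹' S : Set (CstarGen S)) : Set (CstarGen S)) :
      Set (H →L[ℂ] H)) = StarAlgebra.adjoin ℂ S := congr(($map_adjoin : Set (H →L[ℂ] H)))
  rw [this]
  exact x.2

theorem mul_comm_of_mem_cstarGen {S : Set (H →L[ℂ] H)} (hcomm : ∀ a ∈ S, ∀ b ∈ S, a * b = b * a)
    (hstar : ∀ a ∈ S, star a ∈ S) {x y : H →L[ℂ] H} (hx : x ∈ CstarGen S) (hy : y ∈ CstarGen S) :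
    x * y = y * x := by
  have hS : S ⊆ StarSubalgebra.centralizer ℂ S := fun a ha ↦
    StarSubalgebra.mem_centralizer_iff ℂ |>.2 fun b hb ↦
      ⟨hcomm b hb a ha, hcomm _ (hstar b hb) a ha⟩
  have hle := StarSubalgebra.topologicalClosure_adjoin_le_centralizer_centralizer ℂ S
  have hy' : y ∈ StarSubalgebra.centralizer ℂ S :=
    StarSubalgebra.centralizer_le ℂ _ _ hS (hle hy)
  exact ((StarSubalgebra.mem_centralizer_iff ℂ).1 (hle hx) y hy').1.symm

/-- A selfadjoint commuting set of operators generates a commutative C*-algebra. -/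
abbrev commCStarAlgebraCstarGen {S : Set (H →L[ℂ] H)} (hcomm : ∀ a ∈ S, ∀ b ∈ S, a * b = b * a)
    (hstar : ∀ a ∈ S, star a ∈ S) : CommCStarAlgebra (CstarGen S) where
  toCStarAlgebra := StarSubalgebra.cstarAlgebra _
    (h_closed := StarSubalgebra.isClosed_topologicalClosure _)
  mul_comm x y := Subtype.ext (mul_comm_of_mem_cstarGen hcomm hstar x.2 y.2)

theorem exists_separating_retractions_center (M : VonNeumannAlgebra H) {G : Set (H →L[ℂ] H)}
    (hGc : G.Countable) (hGM : G ⊆ M) (hG : ∀ p ∈ G, IsStarProjection p)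
    (hcomm : ∀ p ∈ G, ∀ q ∈ G, p * q = q * p) :
    ∃ ψ : ℕ → CstarGen (G ∪ center M) →⋆ₐ[ℂ] center M,
      (∀ k (a : CstarGen (G ∪ center M)) (ha : (a : H →L[ℂ] H) ∈ center M), ψ k a = ⟨a, ha⟩) ∧
      (∀ a ≠ 0, ∃ k, ψ k a ≠ 0) ∧
      ∀ a : CstarGen (G ∪ center M), (a : H →L[ℂ] H) ∈ G →
        ∃ k, (ψ k a * a : H →L[ℂ] H) = a := by
  let D := CstarGen (G ∪ center M)
  have hcomm' : ∀ a ∈ G ∪ center M, ∀ b ∈ G ∪ center M, a * b = b * a := by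
    rintro a (ha | ha) b (hb | hb)
    exacts [hcomm a ha b hb, (mul_comm_of_mem_center hb (hGM ha)).symm,
      mul_comm_of_mem_center ha (hGM hb), mul_comm_of_mem_center ha hb.1]
  have hstar : ∀ a ∈ G ∪ center M, star a ∈ G ∪ center M := by
    rintro a (ha | ha)
    exacts [.inl ((hG a ha).isSelfAdjoint.star_eq.symm ▸ ha), .inr (star_mem ha)]
  let : CommCStarAlgebra D := commCStarAlgebraCstarGen hcomm' hstar
  have hle : center M ≤ D := Set.subset_union_right.trans (subset_cstarGen _)
  let ι : center M →⋆ₐ[ℂ] D := StarSubalgebra.inclusion hle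
  have range_ι : Set.range ι = ((↑) ⁻¹' (center M : Set (H →L[ℂ] H)) : Set D) :=
    Set.range_inclusion hle
  have hsupp (S : Set D) : ∃ c, IsSupport ι S c := by
    obtain ⟨c, hc, hcS, hcz⟩ := exists_central_support M ((↑) '' S)
    rw [Set.forall_mem_image] at hcS
    refine ⟨⟨c, hc⟩, fun s hs ↦ Subtype.ext (hcS hs), fun z hz ↦ Subtype.ext ?_⟩
    exact hcz z z.2 (Set.forall_mem_image.2 fun s hs ↦ congrArg Subtype.val (hz s hs))
  obtain ⟨ψ, hψι, hψ, hψG⟩ := exists_separating_retractions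
    (StarSubalgebra.inclusion_injective hle) hsupp (P := (Subtype.val ⁻¹' G : Set D))
    (hGc.preimage Subtype.val_injective) (fun p hp ↦ isStarProjection_coe_iff.1 (hG p hp))
    (by rw [range_ι, ← Set.preimage_union]; exact dense_adjoin_preimage_cstarGen _)
  refine ⟨ψ, fun k a ha ↦ hψι k ⟨a, ha⟩, hψ, fun a ha ↦ ?_⟩
  obtain ⟨k, hk⟩ := hψG a ha
  exact ⟨k, congrArg Subtype.val hk⟩

end VonNeumannAlgebra

section ProjSupSeq

variable {H : Type*} [NormedAddCommGroup H] [InnerProductSpace ℂ H]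

theorem commute_projSupSeq {e : ℕ → H →L[ℂ] H} {x : H →L[ℂ] H} (h : ∀ k, Commute x (e k)) (m : ℕ) :
    Commute x (projSupSeq e m) := by
  induction m with
  | zero => exact h 0
  | succ m ih => exact (ih.add_right (h _)).sub_right (ih.mul_right (h _))

variable [CompleteSpace H]

theorem isStarProjection_projSupSeq {e : ℕ → H →L[ℂ] H} (he : ∀ k, IsStarProjection (e k))
    (hcomm : ∀ j k, Commute (e j) (e k)) (m : ℕ) : IsStarProjection (projSupSeq e m) := by
  induction m with
  | zero => exact he 0
  | succ m ih => exact ih.add_sub_mul_of_commute (commute_projSupSeq (hcomm _) m).symm (he _)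

theorem monotone_projSupSeq {e : ℕ → H →L[ℂ] H} (he : ∀ k, IsStarProjection (e k))
    (hcomm : ∀ j k, Commute (e j) (e k)) : Monotone (projSupSeq e) := by
  refine monotone_nat_of_le_succ fun m ↦ ?_
  have hproj := isStarProjection_projSupSeq he hcomm
  rw [(hproj m).le_iff_mul_eq_left (hproj (m + 1)), projSupSeq, mul_sub, mul_add, ← mul_assoc,
    (hproj m).isIdempotentElem.eq, add_sub_cancel_right]

theorem le_projSupSeq {e : ℕ → H →L[ℂ] H} (he : ∀ k, IsStarProjection (e k))
    (hcomm : ∀ j k, Commute (e j) (e k)) (k : ℕ) : e k ≤ projSupSeq e k := by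
  rw [(he k).le_iff_mul_eq_right (isStarProjection_projSupSeq he hcomm k)]
  cases k with
  | zero => exact (he 0).isIdempotentElem
  | succ k =>
    rw [projSupSeq, sub_mul, add_mul, mul_assoc, (he _).isIdempotentElem.eq, add_sub_cancel_left]

theorem exists_isStarProjection_tendsto_of_monotone {α : Type*} [Preorder α] {e : α → H →L[ℂ] H}
    (he : ∀ i, IsStarProjection (e i)) (hmono : Monotone e) :
    ∃ s : H →L[ℂ] H, IsStarProjection s ∧ (∀ i, e i ≤ s) ∧
      ∀ ξ, Tendsto (fun i ↦ e i ξ) atTop (𝓝 (s ξ)) := by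
  choose _ he_eq using fun i ↦ isStarProjection_iff_eq_starProjection_range.1 (he i)
  have hU : Monotone fun i ↦ (e i).range := fun i j hij ↦
    Submodule.starProjection_le_starProjection_iff.1 (he_eq i ▸ he_eq j ▸ hmono hij)
  let K := (⨆ i, (e i).range).topologicalClosure
  have : CompleteSpace K := (Submodule.isClosed_topologicalClosure _).completeSpace_coe
  refine ⟨K.starProjection, isStarProjection_starProjection, fun i ↦ ?_, fun ξ ↦ ?_⟩
  · rw [he_eq i, Submodule.starProjection_le_starProjection_iff]
    exact (le_iSup (fun i ↦ (e i).range) i).trans (Submodule.le_topologicalClosure _)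
  · exact (Submodule.starProjection_tendsto_closure_iSup _ hU ξ).congr fun i ↦
      congr($(he_eq i) ξ).symm

theorem exists_tendsto_projSupSeq {e : ℕ → H →L[ℂ] H} (he : ∀ k, IsStarProjection (e k))
    (hcomm : ∀ j k, Commute (e j) (e k)) {p : H →L[ℂ] H} (hp : IsStarProjection p)
    (hpe : ∃ k, e k * p = p) :
    ∃ s : H →L[ℂ] H, (∀ ξ, Tendsto (fun m ↦ projSupSeq e m ξ) atTop (𝓝 (s ξ))) ∧ s * p = p := by
  obtain ⟨k, hk⟩ := hpe
  obtain ⟨s, hs, hs_le, hs_lim⟩ := exists_isStarProjection_tendsto_of_monotone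
    (isStarProjection_projSupSeq he hcomm) (monotone_projSupSeq he hcomm)
  refine ⟨s, hs_lim, (hp.le_iff_mul_eq_right hs).1 ?_⟩
  calc
    p ≤ e k := (hp.le_iff_mul_eq_right (he k)).2 hk
    _ ≤ projSupSeq e k := le_projSupSeq he hcomm k
    _ ≤ s := hs_le k

end ProjSupSeq

end VNA

open VNA in
theorem statement_12_general {H : Type*} [NormedAddCommGroup H] [InnerProductSpace ℂ H]
    [CompleteSpace H] (M : VonNeumannAlgebra H)
    (G Z : Set (H →L[ℂ] H)) (hGc : G.Countable)
    (hG : ∀ p ∈ G, p ∈ M ∧ IsProjection p)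
    (hGcomm : ∀ p ∈ G, ∀ q ∈ G, p * q = q * p)
    (hZ : Z ⊆ centerSet M) :
    ∃ ψ : ℕ → (CstarGen (G ∪ Z) →⋆ₐ[ℂ] (H →L[ℂ] H)),
      (∀ k (a : CstarGen (G ∪ Z)), ψ k a ∈ centerSet M) ∧
      (∀ k (b : H →L[ℂ] H), b ∈ CstarGen Z → ∀ hb' : b ∈ CstarGen (G ∪ Z),
        ψ k ⟨b, hb'⟩ = b) ∧
      (∀ a : CstarGen (G ∪ Z), a ≠ 0 → ∃ k, ψ k a ≠ 0) ∧
      (∀ p, p ∈ G → ∀ hp' : p ∈ CstarGen (G ∪ Z),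
        ∃ s : H →L[ℂ] H,
          (∀ ξ : H, Filter.Tendsto
            (fun m => projSupSeq (fun k => ψ k ⟨p, hp'⟩) m ξ) Filter.atTop (nhds (s ξ))) ∧
          s * p = p) := by
  have hZ' : Z ⊆ center M := fun z hz ↦ mem_center_iff_mem_centerSet.2 (hZ hz)
  obtain ⟨ψ, hψ_center, hψ_ne, hψ_mul⟩ := exists_separating_retractions_center M hGc
    (fun p hp ↦ (hG p hp).1) (fun p hp ↦ isProjection_iff_isStarProjection.1 (hG p hp).2) hGcomm
  let incl := StarSubalgebra.inclusion (cstarGen_mono (Set.union_subset_union_right G hZ'))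
  refine ⟨fun k ↦ (center M).subtype.comp ((ψ k).comp incl),
    fun k a ↦ mem_center_iff_mem_centerSet.1 (ψ k (incl a)).2, fun k b hb hb' ↦ ?_,
    fun a ha ↦ ?_, fun p hp hp' ↦ ?_⟩
  · exact congrArg Subtype.val
      (hψ_center k (incl ⟨b, hb'⟩) (cstarGen_le (isClosed_center M) hZ' hb))
  · obtain ⟨k, hk⟩ := hψ_ne (incl a) <|
      (map_ne_zero_iff incl (StarSubalgebra.inclusion_injective _)).2 ha
    exact ⟨k, fun h ↦ hk (Subtype.ext h)⟩
  · have hproj : IsStarProjection p := isProjection_iff_isStarProjection.1 (hG p hp).2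
    let a : CstarGen (G ∪ center M) := incl ⟨p, hp'⟩
    have ha : IsStarProjection a := isStarProjection_coe_iff.1 hproj
    exact exists_tendsto_projSupSeq (fun j ↦ ha.map ((center M).subtype.comp (ψ j)))
      (fun i j ↦ (Commute.all (ψ i a) (ψ j a)).map (center M).subtype) hproj (hψ_mul a hp)

open VNA in
/-- Existence of a separating sequence of centre-valued unital
*-homomorphisms on `C*(G ∪ Z)` which fix `C*(Z)` and satisfy `p ≤ ⋁_k ψ_k(p)` for `p ∈ G`. -/
theorem statement_12 {H : Type*} [NormedAddCommGroup H] [InnerProductSpace ℂ H]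
    [CompleteSpace H] (M : VonNeumannAlgebra H)
    (G Z : Set (H →L[ℂ] H)) (hGc : G.Countable) (hZc : Z.Countable)
    (hG : ∀ p ∈ G, p ∈ M ∧ IsProjection p)
    (hGcomm : ∀ p ∈ G, ∀ q ∈ G, p * q = q * p)
    (hZ : ∀ z ∈ Z, IsProjection z ∧ z ∈ centerSet M)
    (h1 : (1 : H →L[ℂ] H) ∈ Z) :
    ∃ ψ : ℕ → (CstarGen (G ∪ Z) →⋆ₐ[ℂ] (H →L[ℂ] H)),
      (∀ k (a : CstarGen (G ∪ Z)), ψ k a ∈ centerSet M) ∧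
      (∀ k (b : H →L[ℂ] H), b ∈ CstarGen Z → ∀ hb' : b ∈ CstarGen (G ∪ Z),
        ψ k ⟨b, hb'⟩ = b) ∧
      (∀ a : CstarGen (G ∪ Z), a ≠ 0 → ∃ k, ψ k a ≠ 0) ∧
      (∀ p, p ∈ G → ∀ hp' : p ∈ CstarGen (G ∪ Z),
        ∃ s : H →L[ℂ] H,
          (∀ ξ : H, Filter.Tendsto
            (fun m => projSupSeq (fun k => ψ k ⟨p, hp'⟩) m ξ) Filter.atTop (nhds (s ξ))) ∧
          s * p = p) :=
  statement_12_general M G Z hGc hG hGcomm fun z hz ↦ (hZ z hz).2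
end
end

section
/- Let M be a properly infinite σ-finite von Neumann algebra with a faithful normal semifinite trace τ, and let α ∈ M^n (n ≥ 1) be a commuting self-adjoint n-tuple such that the only finite projection of M belonging to WZ*(α) is 0. Then there exists a sequence of isometries (v_j)_{j≥0} in M such that: (i) v_{j₁}* v_{j₂} = δ_{j₁,j₂}·1 for all j₁, j₂ ≥ 0; (ii) [v_j, α(i)] ∈ K(M,τ) for every j ≥ 0 and every 1 ≤ i ≤ n; (iii) ‖[v_j, α]‖ → 0 as j → ∞. -/
open ContinuousLinearMap Filter Topology

noncomputable section

/-!
Each `α i` is a norm limit of real combinations of projections in the commutative algebra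
`A = WZ*(α)`, so it suffices to make the isometries commute with more and more of these projections.
Since `A` contains no nonzero `τ`-finite projection, the comparison theorem embeds every `τ`-finite
projection `f` commuting with finitely many `e ∈ A` into any `E ∈ A` above it, away from a given
`τ`-finite projection; doing this separately below every product of the `e` and `1 - e` gives a
partial isometry with initial projection `f` that commutes with every `e`.

By `σ`-finiteness, `1 = ∑ₖ f j k` for every `j`, with `f j k` `τ`-finite and commuting with the
`(j + k)`-th finite set of projections of `A`. Embedding all the `f j k` with pairwise orthogonal
ranges by `w j k`, the strong sums `v j = ∑ₖ w j k` are isometries with orthogonal ranges, and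
`[v j, α i] = ∑ₖ [w j k, α i]` is a norm-convergent series of `τ`-finitely supported operators whose
tails control the norm as `j → ∞`.
-/

namespace VNA

section Preliminaries

variable {β : Type*}

lemma exists_seq_of_forall_finset {p : ℕ → β → Prop} {r : β → β → Prop}
    (h : ∀ n (s : Finset β), (∀ x ∈ s, ∃ m, p m x) → ∃ y, p n y ∧ ∀ x ∈ s, r x y) :
    ∃ f : ℕ → β, (∀ n, p n (f n)) ∧ ∀ m n, m < n → r (f m) (f n) := by
  classical
  have : Nonempty β := ⟨(h 0 ∅ (by simp)).choose⟩
  choose! g hgp hgr using h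
  let s : ℕ → Finset β := fun n => Nat.rec ∅ (fun m t => insert (g m t) t) n
  have hs_mono : Monotone s := monotone_nat_of_le_succ fun n => Finset.subset_insert _ _
  have hs : ∀ n, ∀ x ∈ s n, ∃ m, p m x := by
    intro n
    induction n with
    | zero => exact fun x hx => absurd hx (Finset.notMem_empty x)
    | succ n ih =>
      intro x hx
      rcases Finset.mem_insert.1 hx with rfl | hx
      exacts [⟨n, hgp n _ ih⟩, ih x hx]
  refine ⟨fun n => g n (s n), fun n => hgp n _ (hs n), fun m n hmn => hgr n _ (hs n) _ ?_⟩
  exact hs_mono (Nat.succ_le_of_lt hmn) (Finset.mem_insert_self _ _)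

lemma exists_maximal_pairwise (P : Set β) {r : β → β → Prop} [Std.Symm r] :
    ∃ S ⊆ P, S.Pairwise r ∧ ∀ u ∈ P, (∀ w ∈ S, r u w) → u ∈ S := by
  obtain ⟨S, ⟨hSP, hSr⟩, hmax⟩ := zorn_subset {S : Set β | S ⊆ P ∧ S.Pairwise r}
    fun c hc hchain => ⟨⋃₀ c, ⟨Set.sUnion_subset fun s hs => (hc hs).1,
      (Set.pairwise_sUnion hchain.directedOn).2 fun s hs => (hc hs).2⟩,
      fun _ => Set.subset_sUnion_of_mem⟩
  refine ⟨S, hSP, hSr, fun u hu hur => hmax ⟨Set.insert_subset hu hSP, ?_⟩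
    (Set.subset_insert u S) (Set.mem_insert u S)⟩
  exact Set.pairwise_insert_of_symm.2 ⟨hSr, fun w hw _ => hur w hw⟩

lemma tendsto_iSup_zero {ι : Type*} [Finite ι] {l : Filter β} {f : β → ι → ℝ}
    (h0 : ∀ x i, 0 ≤ f x i) (h : ∀ i, Tendsto (fun x => f x i) l (𝓝 0)) :
    Tendsto (fun x => ⨆ i, f x i) l (𝓝 0) := by
  have := Fintype.ofFinite ι
  have hsum := tendsto_finsetSum Finset.univ fun i _ => h i
  rw [Finset.sum_const_zero] at hsum
  refine squeeze_zero (fun x => Real.iSup_nonneg (h0 x)) (fun x => ?_) hsum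
  exact Real.iSup_le (fun i => Finset.single_le_sum (fun i _ => h0 x i) (Finset.mem_univ i))
    (Finset.sum_nonneg fun i _ => h0 x i)

end Preliminaries

section StarRing

lemma mul_eq_of_mul_eq_of_isSelfAdjoint {R : Type*} [Mul R] [StarMul R] {p q r : R}
    (hp : IsSelfAdjoint p) (hq : IsSelfAdjoint q) (hr : IsSelfAdjoint r) (h : p * q = r) :
    q * p = r := by
  simpa only [star_mul, hp.star_eq, hq.star_eq, hr.star_eq] using congr(star $h)

lemma norm_commutator_le_of_commute {R : Type*} [NormedRing R] {y d : R} (h : Commute y d)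
    (a : R) : ‖y * a - a * y‖ ≤ 2 * ‖y‖ * ‖a - d‖ :=
  calc ‖y * a - a * y‖ = ‖y * (a - d) - (a - d) * y‖ := by
        rw [mul_sub, sub_mul, h.eq, sub_sub_sub_cancel_right]
    _ ≤ ‖y‖ * ‖a - d‖ + ‖a - d‖ * ‖y‖ :=
        (norm_sub_le _ _).trans (add_le_add (norm_mul_le _ _) (norm_mul_le _ _))
    _ = 2 * ‖y‖ * ‖a - d‖ := by ring

/-- Partial isometries, characterised by `w w* w = w`; then `w* w` is the initial and `w w*` the
final projection. -/
def IsPartialIsometry {R : Type*} [Mul R] [Star R] (w : R) : Prop := w * star w * w = w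

namespace IsPartialIsometry

section Semigroup

variable {R : Type*} [Semigroup R] [StarMul R] {w : R}

lemma star_mul_mul_star (hw : IsPartialIsometry w) : star w * w * star w = star w := by
  simpa only [IsPartialIsometry, star_mul, star_star, mul_assoc] using congr(star $hw)

lemma isStarProjection_star_mul_self (hw : IsPartialIsometry w) :
    IsStarProjection (star w * w) where
  isIdempotentElem := by
    rw [IsIdempotentElem, ← mul_assoc, hw.star_mul_mul_star]
  isSelfAdjoint := .star_mul_self w

lemma isStarProjection_mul_star_self (hw : IsPartialIsometry w) :
    IsStarProjection (w * star w) where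
  isIdempotentElem := by rw [IsIdempotentElem, ← mul_assoc, hw]
  isSelfAdjoint := .mul_star_self w

end Semigroup

lemma isStarProjection_sub_mul_star_self {R : Type*} [NonUnitalRing R] [StarRing R] {w q : R}
    (hw : IsPartialIsometry w) (hq : IsStarProjection q) (h : q * w = w) :
    IsStarProjection (q - w * star w) :=
  hw.isStarProjection_mul_star_self.sub_of_mul_eq_right hq (by rw [← mul_assoc, h])

lemma isStarProjection_sub_star_mul_self {R : Type*} [NonUnitalRing R] [StarRing R] {w q : R}
    (hw : IsPartialIsometry w) (hq : IsStarProjection q) (h : w * q = w) :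
    IsStarProjection (q - star w * w) :=
  hw.isStarProjection_star_mul_self.sub_of_mul_eq_left hq (by rw [mul_assoc, h])

variable {R : Type*} [NonUnitalNormedRing R] [StarRing R] [CStarRing R] {w : R}

lemma of_isStarProjection (h : IsStarProjection (star w * w)) : IsPartialIsometry w := by
  have hp : star w * w * (star w * w) = star w * w := h.isIdempotentElem
  have hzero : star (w * (star w * w) - w) * (w * (star w * w) - w) = 0 := by
    simp only [star_sub, star_mul, star_star, mul_sub, sub_mul]
    simp only [mul_assoc] at hp ⊢
    simp only [hp, sub_self]
  simpa only [IsPartialIsometry, mul_assoc, sub_eq_zero] using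
    (CStarRing.star_mul_self_eq_zero_iff _).1 hzero

lemma norm_le_one (hw : IsPartialIsometry w) : ‖w‖ ≤ 1 := by
  have h : ‖w‖ * ‖w‖ ≤ 1 := by
    rw [← CStarRing.norm_star_mul_self]
    exact hw.isStarProjection_star_mul_self.norm_le
  nlinarith [norm_nonneg w]

end IsPartialIsometry

/-- The successive differences `Q 0, Q 1 - Q 0, Q 2 - Q 1, …` of a sequence. -/
def successiveDiff {R : Type*} [Sub R] (Q : ℕ → R) : ℕ → R
  | 0 => Q 0
  | k + 1 => Q (k + 1) - Q k

section SuccessiveDiff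

variable {R : Type*} [Ring R] {Q : ℕ → R}

lemma eq_of_mul_successiveDiff_eq {y : R}
    (h : ∀ k, y * successiveDiff Q k = successiveDiff Q k) (k : ℕ) : y * Q k = Q k := by
  induction k with
  | zero => exact h 0
  | succ k ih => simpa only [successiveDiff, mul_sub, ih, sub_left_inj] using h (k + 1)

lemma mul_successiveDiff_of_le (hmono : ∀ k l, k ≤ l → Q l * Q k = Q k) :
    ∀ {k l}, k ≤ l → Q l * successiveDiff Q k = successiveDiff Q k
  | 0, l, _ => hmono 0 l l.zero_le
  | k + 1, l, hkl => by
    rw [successiveDiff, mul_sub, hmono _ _ hkl, hmono _ _ (k.le_succ.trans hkl)]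

variable [StarRing R]

lemma isStarProjection_successiveDiff (hQ : ∀ k, IsStarProjection (Q k))
    (hmono : ∀ k l, k ≤ l → Q l * Q k = Q k) : ∀ k, IsStarProjection (successiveDiff Q k)
  | 0 => hQ 0
  | k + 1 => (hQ k).sub_of_mul_eq_right (hQ (k + 1)) (hmono k (k + 1) k.le_succ)

lemma successiveDiff_mul_eq_zero (hQ : ∀ k, IsStarProjection (Q k))
    (hmono : ∀ k l, k ≤ l → Q l * Q k = Q k) :
    Pairwise fun k l => successiveDiff Q k * successiveDiff Q l = 0 := by
  have hd := isStarProjection_successiveDiff hQ hmono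
  have hmono' : ∀ k l, k ≤ l → Q k * Q l = Q k := fun k l hkl =>
    mul_eq_of_mul_eq_of_isSelfAdjoint (hQ l).isSelfAdjoint (hQ k).isSelfAdjoint
      (hQ k).isSelfAdjoint (hmono k l hkl)
  have hlt : ∀ k l, k < l → successiveDiff Q k * successiveDiff Q l = 0 := by
    rintro k (_ | l) hkl
    · exact absurd hkl k.not_lt_zero
    · have hdQ : successiveDiff Q k * Q k = successiveDiff Q k :=
        mul_eq_of_mul_eq_of_isSelfAdjoint (hQ k).isSelfAdjoint (hd k).isSelfAdjoint
          (hd k).isSelfAdjoint (mul_successiveDiff_of_le hmono le_rfl)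
      rw [← hdQ, mul_assoc, successiveDiff, mul_sub, hmono' _ _ hkl.le,
        hmono' _ _ (Nat.le_of_lt_succ hkl), sub_self, mul_zero]
  intro k l hkl
  rcases hkl.lt_or_gt with h | h
  · exact hlt k l h
  · exact mul_eq_of_mul_eq_of_isSelfAdjoint (hd l).isSelfAdjoint (hd k).isSelfAdjoint
      (.zero R) (hlt l k h)

end SuccessiveDiff

end StarRing

section StrongSum

variable {𝕜 E ι : Type*} [NontriviallyNormedField 𝕜] [NormedAddCommGroup E] [NormedSpace 𝕜 E]
  {w : ι → E →L[𝕜] E} {W y z : E →L[𝕜] E}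

/-- Unconditional convergence of `∑ i, w i` to `W` in the strong operator topology. -/
def HasStrongSum (w : ι → E →L[𝕜] E) (W : E →L[𝕜] E) : Prop :=
  ∀ ξ, HasSum (fun i => w i ξ) (W ξ)

lemma hasStrongSum_of_hasSum (h : HasSum w W) : HasStrongSum w W := fun ξ =>
  h.mapL (ContinuousLinearMap.apply 𝕜 E ξ)

namespace HasStrongSum

lemma unique {W' : E →L[𝕜] E} (h : HasStrongSum w W) (h' : HasStrongSum w W') : W = W' :=
  ContinuousLinearMap.ext fun ξ => (h ξ).unique (h' ξ)

lemma mul_left (h : HasStrongSum w W) (y : E →L[𝕜] E) :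
    HasStrongSum (fun i => y * w i) (y * W) := fun ξ => (h ξ).mapL y

lemma mul_right (h : HasStrongSum w W) (y : E →L[𝕜] E) :
    HasStrongSum (fun i => w i * y) (W * y) := fun ξ => h (y ξ)

lemma sub {w' : ι → E →L[𝕜] E} {W' : E →L[𝕜] E} (h : HasStrongSum w W)
    (h' : HasStrongSum w' W') : HasStrongSum (fun i => w i - w' i) (W - W') := fun ξ =>
  (h ξ).sub (h' ξ)

lemma mul_left_congr (h : HasStrongSum w W) (hyz : ∀ i, y * w i = z * w i) : y * W = z * W :=
  (h.mul_left y).unique (by simpa only [hyz] using h.mul_left z)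

lemma mul_left_eq_self (h : HasStrongSum w W) (hy : ∀ i, y * w i = w i) : y * W = W :=
  (h.mul_left y).unique (by simpa only [hy] using h)

lemma mul_right_eq_self (h : HasStrongSum w W) (hy : ∀ i, w i * y = w i) : W * y = W :=
  (h.mul_right y).unique (by simpa only [hy] using h)

end HasStrongSum

end StrongSum

variable {H : Type*} [NormedAddCommGroup H] [InnerProductSpace ℂ H] [CompleteSpace H]

section RangeProj

variable {S : Set (H →L[ℂ] H)} {p x y z : H →L[ℂ] H}

/-- The projection onto the closed span of the ranges of the operators in `S`: the smallest
projection `p` with `p * x = x` for all `x ∈ S`. For a singleton it is the range projection, and for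
a set of projections it is the supremum. -/
def rangeProj (S : Set (H →L[ℂ] H)) : H →L[ℂ] H :=
  (Submodule.span ℂ {ξ | ∃ x ∈ S, ∃ η, x η = ξ}).topologicalClosure.starProjection

lemma isStarProjection_rangeProj (S : Set (H →L[ℂ] H)) : IsStarProjection (rangeProj S) :=
  isStarProjection_starProjection

lemma rangeProj_mul (hx : x ∈ S) : rangeProj S * x = x := by
  ext ξ
  exact Submodule.starProjection_eq_self_iff.2
    (Submodule.le_topologicalClosure _ (Submodule.subset_span ⟨x, hx, ξ, rfl⟩))

lemma mul_rangeProj_congr (h : ∀ x ∈ S, y * x = z * x) : y * rangeProj S = z * rangeProj S := by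
  ext ξ
  have hEq : Set.EqOn y z {ξ | ∃ x ∈ S, ∃ η, x η = ξ} := by
    rintro _ ⟨x, hx, η, rfl⟩
    exact congr($(h x hx) η)
  exact eqOn_closure_span hEq
    (Submodule.starProjection_apply_mem (Submodule.topologicalClosure _) ξ)

lemma mul_rangeProj_eq_zero (h : ∀ x ∈ S, y * x = 0) : y * rangeProj S = 0 := by
  simpa only [zero_mul] using mul_rangeProj_congr fun x hx => (h x hx).trans (zero_mul x).symm

lemma mul_rangeProj_eq_self (h : ∀ x ∈ S, y * x = x) : y * rangeProj S = rangeProj S := by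
  simpa only [one_mul] using mul_rangeProj_congr fun x hx => (h x hx).trans (one_mul x).symm

lemma eq_rangeProj (hp : IsSelfAdjoint p) (hpS : ∀ x ∈ S, p * x = x)
    (hmin : ∀ y : H →L[ℂ] H, (∀ x ∈ S, y * x = 0) → y * p = 0) : p = rangeProj S := by
  have hP := (isStarProjection_rangeProj S).isSelfAdjoint
  have hPp : rangeProj S * p = p := by
    have := hmin (1 - rangeProj S) fun x hx => by rw [sub_mul, one_mul, rangeProj_mul hx, sub_self]
    rwa [sub_mul, one_mul, sub_eq_zero, eq_comm] at this
  rw [← mul_eq_of_mul_eq_of_isSelfAdjoint hP hp hp hPp, mul_rangeProj_eq_self hpS]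

lemma rangeProj_singleton_congr (h : ∀ y : H →L[ℂ] H, y * x = 0 ↔ y * z = 0) :
    rangeProj {x} = rangeProj {z} := by
  refine eq_rangeProj (isStarProjection_rangeProj _).isSelfAdjoint ?_ fun y hy => ?_
  · have hx : (1 - rangeProj {x}) * x = 0 := by
      rw [sub_mul, one_mul, rangeProj_mul (Set.mem_singleton x), sub_self]
    rintro _ rfl
    rwa [h, sub_mul, one_mul, sub_eq_zero, eq_comm] at hx
  · exact mul_rangeProj_eq_zero fun _ hx => hx ▸ (h y).2 (hy z rfl)

lemma commute_rangeProj (h : ∀ x ∈ S, rangeProj S * (y * x) = y * x)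
    (h' : ∀ x ∈ S, rangeProj S * (star y * x) = star y * x) : Commute y (rangeProj S) := by
  have key {u : H →L[ℂ] H} (hu : ∀ x ∈ S, rangeProj S * (u * x) = u * x) :
      rangeProj S * u * rangeProj S = u * rangeProj S :=
    mul_rangeProj_congr fun x hx => by rw [mul_assoc, hu x hx]
  have hstar := congr(star $(key h'))
  simp only [star_mul, star_star, (isStarProjection_rangeProj S).isSelfAdjoint.star_eq,
    ← mul_assoc] at hstar
  exact (key h).symm.trans hstar

lemma commute_rangeProj_of_commute (h : ∀ x ∈ S, Commute y x) (h' : ∀ x ∈ S, Commute (star y) x) :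
    Commute y (rangeProj S) :=
  commute_rangeProj (fun x hx => by rw [(h x hx).eq, ← mul_assoc, rangeProj_mul hx])
    fun x hx => by rw [(h' x hx).eq, ← mul_assoc, rangeProj_mul hx]

lemma commute_rangeProj_of_isSelfAdjoint (hS : ∀ x ∈ S, IsSelfAdjoint x)
    (h : ∀ x ∈ S, Commute y x) : Commute y (rangeProj S) :=
  commute_rangeProj_of_commute h fun x hx => by
    simpa only [(hS x hx).star_eq] using (h x hx).star_star

end RangeProj

section VonNeumannAlgebra

variable {M : VonNeumannAlgebra H} {S : Set (H →L[ℂ] H)} {x y : H →L[ℂ] H}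

lemma mem_of_forall_commute (h : ∀ y ∈ M.commutant, Commute y x) : x ∈ M := by
  rw [← M.commutant_commutant, VonNeumannAlgebra.mem_commutant_iff]
  exact h

lemma commute_of_mem_commutant (hy : y ∈ M.commutant) (hx : x ∈ M) : Commute y x :=
  (VonNeumannAlgebra.mem_commutant_iff.1 hy x hx).symm

lemma rangeProj_mem (hS : ∀ x ∈ S, x ∈ M) : rangeProj S ∈ M :=
  mem_of_forall_commute fun _ hy =>
    commute_rangeProj_of_commute (fun x hx => commute_of_mem_commutant hy (hS x hx))
      fun x hx => commute_of_mem_commutant (star_mem hy) (hS x hx)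

end VonNeumannAlgebra

section Polar

variable {a x : H →L[ℂ] H}

lemma norm_apply_eq_of_star_mul_self_eq (h : star a * a = star x * x) (ξ : H) :
    ‖a ξ‖ = ‖x ξ‖ := by
  rw [apply_norm_eq_sqrt_inner_adjoint_left, apply_norm_eq_sqrt_inner_adjoint_left,
    ← star_eq_adjoint, ← star_eq_adjoint]
  exact congr(√(RCLike.re (inner ℂ ($h ξ) ξ)))

lemma exists_mul_eq_of_norm_le {C : ℝ} (h : ∀ ξ, ‖x ξ‖ ≤ C * ‖a ξ‖) :
    ∃ v : H →L[ℂ] H, v * a = x := by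
  let K := (LinearMap.range (a : H →ₗ[ℂ] H)).topologicalClosure
  have hmem (ξ : H) : a ξ ∈ K := Submodule.le_topologicalClosure _ ⟨ξ, rfl⟩
  let e : H →ₗ[ℂ] K := LinearMap.codRestrict K (a : H →ₗ[ℂ] H) hmem
  have he : DenseRange e := by
    rintro ⟨k, hk⟩
    rw [closure_subtype, ← Set.range_comp]
    exact hk
  refine ⟨((x : H →ₗ[ℂ] H).extendOfNorm e).comp K.orthogonalProjectionOnto, ?_⟩
  ext ξ
  exact congr((x : H →ₗ[ℂ] H).extendOfNorm e
    $(Submodule.orthogonalProjectionOnto_mem_subspace_eq_self (e ξ))).trans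
      (LinearMap.extendOfNorm_eq he ⟨C, h⟩ ξ)

lemma exists_mul_eq_of_mul_self_eq (ha : IsSelfAdjoint a) (h : a * a = star x * x) :
    ∃ v : H →L[ℂ] H, v * a = x ∧ star v * v = rangeProj {a} := by
  obtain ⟨u, hu⟩ := exists_mul_eq_of_norm_le (x := x) (a := a) (C := 1) fun ξ => by
    rw [one_mul]
    exact (norm_apply_eq_of_star_mul_self_eq (by rw [ha.star_eq, h]) ξ).ge
  have hr := (isStarProjection_rangeProj {a}).isSelfAdjoint
  have hra : rangeProj {a} * a = a := rangeProj_mul (Set.mem_singleton a)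
  have har : a * rangeProj {a} = a := mul_eq_of_mul_eq_of_isSelfAdjoint hr ha ha hra
  have hleft : a * star u * u * rangeProj {a} = a * rangeProj {a} := by
    refine mul_rangeProj_congr fun y hy => ?_
    rw [Set.mem_singleton_iff.1 hy, h, mul_assoc, hu, ← hu, star_mul, ha.star_eq]
  have hright : rangeProj {a} * star u * u * rangeProj {a} = 1 * rangeProj {a} := by
    refine mul_rangeProj_congr fun y hy => ?_
    have hstar := congr(star $(hleft.trans har))
    simpa only [Set.mem_singleton_iff.1 hy, one_mul, star_mul, star_star, hr.star_eq, ha.star_eq,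
      mul_assoc] using hstar
  refine ⟨u * rangeProj {a}, by rw [mul_assoc, hra, hu], ?_⟩
  rw [star_mul, hr.star_eq, ← mul_assoc, hright, one_mul]

lemma rangeProj_star_eq_rangeProj_abs (x : H →L[ℂ] H) :
    rangeProj {star x} = rangeProj {CFC.abs x} := by
  refine rangeProj_singleton_congr fun y => ?_
  have h : star (x * star y) * (x * star y) =
      star (CFC.abs x * star y) * (CFC.abs x * star y) := by
    simp only [star_mul, star_star, (CFC.abs_nonneg x).isSelfAdjoint.star_eq, mul_assoc]
    rw [← mul_assoc (star x), ← CFC.abs_mul_abs x, mul_assoc]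
  rw [← star_eq_zero, star_mul, star_star, ← CStarRing.star_mul_self_eq_zero_iff, h,
    CStarRing.star_mul_self_eq_zero_iff, ← star_eq_zero, star_mul, star_star,
    (CFC.abs_nonneg x).isSelfAdjoint.star_eq]

lemma mvNE_rangeProj {M : VonNeumannAlgebra H} (hx : x ∈ M) :
    MvNE M (rangeProj {star x}) (rangeProj {x}) := by
  have ha := (CFC.abs_nonneg x).isSelfAdjoint
  obtain ⟨v, hva, hv⟩ := exists_mul_eq_of_mul_self_eq ha (CFC.abs_mul_abs x)
  have hr := isStarProjection_rangeProj {CFC.abs x}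
  have hvr : v * rangeProj {CFC.abs x} = v := by
    rw [← hv, ← mul_assoc]
    exact IsPartialIsometry.of_isStarProjection (hv ▸ hr)
  rw [rangeProj_star_eq_rangeProj_abs]
  refine ⟨v, mem_of_forall_commute fun y hy => ?_, hv, eq_rangeProj (.mul_star_self v) ?_ ?_⟩
  · have hya : Commute y (CFC.abs x) := Commute.cfcAbs_right (commute_of_mem_commutant hy hx).symm
      (commute_of_mem_commutant (star_mem hy) hx).symm
    have hyr : Commute y (rangeProj {CFC.abs x}) :=
      commute_rangeProj_of_isSelfAdjoint (by simpa using ha) (by simpa using hya)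
    have hyv : y * v * rangeProj {CFC.abs x} = v * y * rangeProj {CFC.abs x} := by
      refine mul_rangeProj_congr fun b hb => ?_
      rw [Set.mem_singleton_iff.1 hb, mul_assoc, hva, mul_assoc, hya.eq, ← mul_assoc, hva,
        (commute_of_mem_commutant hy hx).eq]
    rwa [mul_assoc, hvr, mul_assoc, hyr.eq, ← mul_assoc, hvr] at hyv
  · rintro _ rfl
    rw [← hva, mul_assoc, ← mul_assoc (star v), hv, rangeProj_mul (Set.mem_singleton _)]
  · intro y hy
    have hyv : y * v * rangeProj {CFC.abs x} = 0 := mul_rangeProj_eq_zero fun b hb => by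
      rw [Set.mem_singleton_iff.1 hb, mul_assoc, hva, hy x rfl]
    rw [mul_assoc, hvr] at hyv
    rw [← mul_assoc, hyv, zero_mul]

end Polar

section Spectral

variable {a : H →L[ℂ] H}

lemma exists_isStarProjection_smul_le (ha : IsSelfAdjoint a) (t : ℝ) :
    ∃ e : H →L[ℂ] H, IsStarProjection e ∧ (∀ y, Commute y a → Commute y e) ∧
      t • e ≤ a * e ∧ a * (1 - e) ≤ t • (1 - e) := by
  set x : H →L[ℂ] H := a - t • 1 with hx
  have hxsa : IsSelfAdjoint x := ha.sub (.smul (.all t) (.one _))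
  have hpsa : IsSelfAdjoint x⁺ := (CFC.posPart_nonneg x).isSelfAdjoint
  set e := rangeProj {x⁺}
  have hpos : x * e = x⁺ := by
    have hneg : x⁻ * e = 0 := mul_rangeProj_eq_zero fun y hy => by
      rw [Set.mem_singleton_iff.1 hy, CFC.negPart_mul_posPart]
    rw [← CFC.posPart_sub_negPart x hxsa, sub_mul, hneg, sub_zero,
      CFC.posPart_sub_negPart x hxsa]
    exact mul_eq_of_mul_eq_of_isSelfAdjoint (isStarProjection_rangeProj _).isSelfAdjoint hpsa hpsa
      (rangeProj_mul (Set.mem_singleton _))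
  have hneg : x * (1 - e) = -x⁻ := by
    rw [mul_sub, hpos, mul_one, sub_eq_iff_eq_add, neg_add_eq_sub, CFC.posPart_sub_negPart x hxsa]
  refine ⟨e, isStarProjection_rangeProj _, fun y hy => ?_, ?_, ?_⟩
  · have hxy : Commute x y := hy.symm.sub_left ((Commute.one_left y).smul_left t)
    have hpy : Commute x⁺ y := by
      rw [CFC.posPart_def]
      exact hxy.cfcₙ_real _
    exact commute_rangeProj_of_isSelfAdjoint (by simpa using hpsa) (by simpa using hpy.symm)
  · rw [← sub_nonneg, ← smul_one_mul, ← sub_mul, ← hx, hpos]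
    exact CFC.posPart_nonneg x
  · rw [← sub_nonpos, ← smul_one_mul, ← sub_mul, ← hx, hneg, neg_nonpos]
    exact CFC.negPart_nonneg x

lemma exists_isStarProjection_sub_half_mem_Icc {L : ℝ} (h0 : 0 ≤ a) (hL : a ≤ L • 1) :
    ∃ e : H →L[ℂ] H, IsStarProjection e ∧ (∀ y, Commute y a → Commute y e) ∧
      0 ≤ a - (L / 2) • e ∧ a - (L / 2) • e ≤ (L / 2) • 1 := by
  obtain ⟨e, he, hcomm, hge, hle⟩ := exists_isStarProjection_smul_le h0.isSelfAdjoint (L / 2)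
  have hae : Commute a e := hcomm a (Commute.refl a)
  refine ⟨e, he, hcomm, ?_, ?_⟩
  · have hnonneg : 0 ≤ a * (1 - e) :=
      ((Commute.one_right a).sub_right hae).mul_nonneg h0 he.one_sub.nonneg
    calc 0 ≤ (a * e - (L / 2) • e) + a * (1 - e) := add_nonneg (sub_nonneg.2 hge) hnonneg
      _ = a - (L / 2) • e := by rw [mul_sub, mul_one]; abel
  · have hnonneg : 0 ≤ (L • 1 - a) * e :=
      (((Commute.one_left e).smul_left L).sub_left hae).mul_nonneg (sub_nonneg.2 hL) he.nonneg
    rw [← sub_nonneg]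
    calc 0 ≤ (L • 1 - a) * e + ((L / 2) • (1 - e) - a * (1 - e)) :=
          add_nonneg hnonneg (sub_nonneg.2 hle)
      _ = (L / 2) • 1 - (a - (L / 2) • e) := by
          have hLe : L • e = (L / 2) • e + (L / 2) • e := by rw [← add_smul, add_halves]
          simp only [sub_mul, mul_sub, smul_mul_assoc, one_mul, mul_one, smul_sub, hLe]
          abel

variable {T : Set (H →L[ℂ] H)}

-- Halving the length `L` of the interval containing the spectrum costs one spectral projection.
lemma exists_mem_span_isStarProjection_norm_sub_le (N : ℕ) {L : ℝ} (h0 : 0 ≤ a) (hL : a ≤ L • 1)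
    (hL0 : 0 ≤ L) (haT : a ∈ T.centralizer) :
    ∃ d ∈ Submodule.span ℝ {e | IsStarProjection e ∧ e ∈ T.centralizer}, ‖a - d‖ ≤ L / 2 ^ N := by
  induction N generalizing a L with
  | zero =>
    refine ⟨0, Submodule.zero_mem _, ?_⟩
    rw [sub_zero, pow_zero, div_one, CStarAlgebra.norm_le_iff_le_algebraMap a hL0 h0,
      Algebra.algebraMap_eq_smul_one]
    exact hL
  | succ N ih =>
    obtain ⟨e, he, hcomm, hge, hle⟩ := exists_isStarProjection_sub_half_mem_Icc h0 hL
    have heT : e ∈ T.centralizer := fun y hy => hcomm y (haT y hy)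
    obtain ⟨d, hd, hnorm⟩ := ih hge hle (by positivity) fun y hy =>
      Commute.sub_right (haT y hy) (Commute.smul_right (heT y hy) (L / 2))
    refine ⟨d + (L / 2) • e, Submodule.add_mem _ hd
      (Submodule.smul_mem _ _ (Submodule.subset_span ⟨he, heT⟩)), ?_⟩
    rwa [add_comm, ← sub_sub, pow_succ', ← div_div]

lemma mem_closure_span_isStarProjection (ha : IsSelfAdjoint a) (haT : a ∈ T.centralizer) :
    a ∈ closure
      (Submodule.span ℝ {e | IsStarProjection e ∧ e ∈ T.centralizer} : Set (H →L[ℂ] H)) := by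
  have hone : (1 : H →L[ℂ] H) ∈ T.centralizer := fun y _ => Commute.one_right y
  have h0 : 0 ≤ a + ‖a‖ • 1 := by
    rw [← neg_le_iff_add_nonneg, ← Algebra.algebraMap_eq_smul_one]
    exact ha.neg_algebraMap_norm_le_self
  have hL : a + ‖a‖ • 1 ≤ (2 * ‖a‖) • 1 := by
    rw [two_mul, add_smul, add_le_add_iff_right, ← Algebra.algebraMap_eq_smul_one]
    exact ha.le_algebraMap_norm_self
  have haT' : a + ‖a‖ • 1 ∈ T.centralizer := fun y hy =>
    Commute.add_right (haT y hy) (Commute.smul_right (hone y hy) ‖a‖)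
  refine Metric.mem_closure_iff.2 fun ε hε => ?_
  obtain ⟨N, hN⟩ : ∃ N : ℕ, 2 * ‖a‖ / 2 ^ N < ε := by
    obtain ⟨N, hN⟩ := pow_unbounded_of_one_lt (2 * ‖a‖ / ε) one_lt_two
    exact ⟨N, (div_lt_comm₀ hε (by positivity)).1 hN⟩
  obtain ⟨d, hd, hnorm⟩ := exists_mem_span_isStarProjection_norm_sub_le N h0 hL (by positivity) haT'
  refine ⟨d - ‖a‖ • 1, Submodule.sub_mem _ hd
    (Submodule.smul_mem _ _ (Submodule.subset_span ⟨.one _, hone⟩)), ?_⟩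
  rw [dist_eq_norm, sub_sub_eq_add_sub]
  exact hnorm.trans_lt hN

end Spectral

section OrthogonalPartialIsometries

variable {ι : Type*} {w : ι → H →L[ℂ] H} {W : H →L[ℂ] H}

namespace HasStrongSum

lemma star_mul_eq_zero {κ : Type*} {w' : κ → H →L[ℂ] H} {W' : H →L[ℂ] H} (h : HasStrongSum w W)
    (h' : HasStrongSum w' W') (horth : ∀ i j, star (w i) * w' j = 0) : star W * W' = 0 := by
  have hW (j : κ) : star W * w' j = 0 := by
    have hj : star (w' j) * W = 0 * W := h.mul_left_congr fun i => by
      simpa only [star_mul, star_star, star_zero, zero_mul] using congr(star $(horth i j))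
    simpa only [star_mul, star_star, star_zero, zero_mul] using congr(star $hj)
  simpa only [zero_mul] using h'.mul_left_congr (z := 0) (fun j => by rw [hW, zero_mul])

lemma mem {M : VonNeumannAlgebra H} (h : HasStrongSum w W) (hM : ∀ i, w i ∈ M) : W ∈ M :=
  mem_of_forall_commute fun y hy => (h.mul_left y).unique (by
    simpa only [(commute_of_mem_commutant hy (hM _)).eq] using h.mul_right y)

end HasStrongSum

/-- Families of partial isometries with pairwise orthogonal initial projections and pairwise
orthogonal final projections. -/
structure IsOrthogonalPartialIsometries (w : ι → H →L[ℂ] H) : Prop where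
  isPartialIsometry : ∀ i, IsPartialIsometry (w i)
  star_mul_eq_zero : Pairwise fun i j => star (w i) * w j = 0
  mul_star_eq_zero : Pairwise fun i j => w i * star (w j) = 0

namespace IsOrthogonalPartialIsometries

lemma isPartialIsometry_sum (h : IsOrthogonalPartialIsometries w) (s : Finset ι) :
    IsPartialIsometry (∑ i ∈ s, w i) := by
  have hleft : (∑ i ∈ s, w i) * star (∑ i ∈ s, w i) = ∑ i ∈ s, w i * star (w i) := by
    rw [star_sum, Finset.sum_mul_sum]
    exact Finset.sum_congr rfl fun i hi => Finset.sum_eq_single_of_mem i hi fun j _ hj =>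
      h.mul_star_eq_zero hj.symm
  rw [IsPartialIsometry, hleft, Finset.sum_mul_sum]
  refine Finset.sum_congr rfl fun i hi => ?_
  rw [Finset.sum_eq_single_of_mem i hi, h.isPartialIsometry i]
  intro j _ hj
  rw [mul_assoc, h.star_mul_eq_zero hj.symm, mul_zero]

lemma norm_sum_apply_le (h : IsOrthogonalPartialIsometries w) (s : Finset ι) (ξ : H) :
    ‖∑ i ∈ s, w i ξ‖ ≤ ‖ξ‖ := by
  rw [← sum_apply]
  exact ((∑ i ∈ s, w i).le_of_opNorm_le (h.isPartialIsometry_sum s).norm_le_one ξ).trans_eq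
    (one_mul _)

lemma summable_apply (h : IsOrthogonalPartialIsometries w) (ξ : H) :
    Summable fun i => w i ξ := by
  have hV : OrthogonalFamily ℂ (fun i => LinearMap.range (w i : H →ₗ[ℂ] H))
      (fun i => (LinearMap.range (w i : H →ₗ[ℂ] H)).subtypeₗᵢ) := by
    rintro i j hij ⟨_, x, rfl⟩ ⟨_, y, rfl⟩
    change inner ℂ (w i x) (w j y) = 0
    rw [← adjoint_inner_right, ← star_eq_adjoint]
    exact congr(inner ℂ x ($(h.star_mul_eq_zero hij) y)).trans (inner_zero_right x)
  let f (i : ι) : LinearMap.range (w i : H →ₗ[ℂ] H) := ⟨w i ξ, ξ, rfl⟩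
  refine (hV.summable_iff_norm_sq_summable f).2 <|
    summable_of_sum_le (c := ‖ξ‖ ^ 2) (fun i => sq_nonneg _) fun s => ?_
  rw [← hV.norm_sum f s]
  exact pow_le_pow_left₀ (norm_nonneg _) (h.norm_sum_apply_le s ξ) 2

lemma exists_hasStrongSum (h : IsOrthogonalPartialIsometries w) : ∃ W, HasStrongSum w W := by
  have hs (ξ : H) : HasSum (fun i => w i ξ) (∑' i, w i ξ) := (h.summable_apply ξ).hasSum
  let L : H →ₗ[ℂ] H := linearMapOfTendsto (l := atTop) (fun ξ => ∑' i, w i ξ)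
    (fun s : Finset ι => ∑ i ∈ s, (w i : H →ₗ[ℂ] H))
    (tendsto_pi_nhds.2 fun ξ => by
      simpa only [LinearMap.sum_apply, coe_coe, HasSum, SummationFilter.unconditional_filter]
        using hs ξ)
  exact ⟨L.mkContinuous 1 fun ξ => (one_mul ‖ξ‖).symm ▸ le_of_tendsto (hs ξ).norm
    (.of_forall fun s => h.norm_sum_apply_le s ξ), hs⟩

lemma hasStrongSum_mul_star (h : IsOrthogonalPartialIsometries w) (hW : HasStrongSum w W)
    (i : ι) : W * star (w i) = w i * star (w i) :=
  (hW.mul_right (star (w i))).unique fun ξ => hasSum_single i fun _ hj =>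
    congr($(h.mul_star_eq_zero hj) ξ)

lemma star_mul_hasStrongSum (h : IsOrthogonalPartialIsometries w) (hW : HasStrongSum w W)
    (i : ι) : star (w i) * W = star (w i) * w i :=
  (hW.mul_left (star (w i))).unique fun ξ => hasSum_single i fun _ hj =>
    congr($(h.star_mul_eq_zero hj.symm) ξ)

lemma hasStrongSum_mul_star_mul (h : IsOrthogonalPartialIsometries w) (hW : HasStrongSum w W)
    (i : ι) : W * star W * w i = w i := by
  have hi : star W * w i = star (w i) * w i := by
    simpa only [star_mul, star_star] using congr(star $(h.star_mul_hasStrongSum hW i))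
  rw [mul_assoc, hi, ← mul_assoc, h.hasStrongSum_mul_star hW, h.isPartialIsometry i]

lemma mul_star_mul_hasStrongSum (h : IsOrthogonalPartialIsometries w) (hW : HasStrongSum w W)
    (i : ι) : w i * star W * W = w i := by
  have hi : w i * star W = w i * star (w i) := by
    simpa only [star_mul, star_star] using congr(star $(h.hasStrongSum_mul_star hW i))
  rw [hi, mul_assoc, h.star_mul_hasStrongSum hW, ← mul_assoc, h.isPartialIsometry i]

lemma isPartialIsometry_of_hasStrongSum (h : IsOrthogonalPartialIsometries w)
    (hW : HasStrongSum w W) : IsPartialIsometry W :=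
  hW.mul_left_eq_self (h.hasStrongSum_mul_star_mul hW)

lemma star_mul_eq_zero_of_sub_mul_eq (h : IsOrthogonalPartialIsometries w)
    (hW : HasStrongSum w W) {i : ι} {q v : H →L[ℂ] H} (hq : IsSelfAdjoint q) (hqw : q * w i = w i)
    (hv : (q - W * star W) * v = v) : star v * w i = 0 := by
  have hstar : star (q - W * star W) = q - W * star W := hq.sub (.mul_star_self W)
  rw [← hv, star_mul, hstar, mul_assoc, sub_mul, hqw, h.hasStrongSum_mul_star_mul hW, sub_self,
    mul_zero]

lemma mul_star_eq_zero_of_mul_sub_eq (h : IsOrthogonalPartialIsometries w)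
    (hW : HasStrongSum w W) {i : ι} {f v : H →L[ℂ] H} (hf : IsSelfAdjoint f) (hwf : w i * f = w i)
    (hv : v * (f - star W * W) = v) : v * star (w i) = 0 := by
  have hstar : star (f - star W * W) = f - star W * W := hf.sub (.star_mul_self W)
  rw [← hv, mul_assoc, ← hstar, ← star_mul, mul_sub, hwf, ← mul_assoc,
    h.mul_star_mul_hasStrongSum hW, sub_self, star_zero, mul_zero]

end IsOrthogonalPartialIsometries

end OrthogonalPartialIsometries

section Trace

variable {M : VonNeumannAlgebra H} {τ : (H →L[ℂ] H) → ENNReal} {p q x : H →L[ℂ] H}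

lemma isProjection_iff : IsProjection p ↔ IsStarProjection p :=
  ⟨fun h => ⟨h.1, h.2⟩, fun h => ⟨h.isIdempotentElem, h.isSelfAdjoint⟩⟩

/-- Faithful semifinite traces on `M`, not assumed to be normal. -/
structure IsFaithfulSemifiniteTrace (M : VonNeumannAlgebra H) (τ : (H →L[ℂ] H) → ENNReal) :
    Prop where
  add : ∀ x y : H →L[ℂ] H, x ∈ M → y ∈ M → 0 ≤ x → 0 ≤ y → τ (x + y) = τ x + τ y
  smul : ∀ (c : ℝ) (x : H →L[ℂ] H), 0 ≤ c → x ∈ M → 0 ≤ x → τ (c • x) = ENNReal.ofReal c * τ x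
  star_mul_self : ∀ x : H →L[ℂ] H, x ∈ M → τ (star x * x) = τ (x * star x)
  faithful : ∀ x : H →L[ℂ] H, x ∈ M → 0 ≤ x → τ x = 0 → x = 0
  semifinite : ∀ x : H →L[ℂ] H, x ∈ M → 0 ≤ x → x ≠ 0 →
    ∃ y, y ∈ M ∧ 0 ≤ y ∧ y ≤ x ∧ y ≠ 0 ∧ τ y < ⊤

lemma IsFNSTrace.isFaithfulSemifiniteTrace (hτ : IsFNSTrace M τ) :
    IsFaithfulSemifiniteTrace M τ where
  add := hτ.additive
  smul := hτ.homogeneous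
  star_mul_self := hτ.tracial
  faithful := hτ.faithful
  semifinite := hτ.semifinite

lemma IsTauFiniteProjection.isStarProjection (hp : IsTauFiniteProjection M τ p) :
    IsStarProjection p := isProjection_iff.1 hp.2.1

namespace IsFaithfulSemifiniteTrace

lemma mono (hτ : IsFaithfulSemifiniteTrace M τ) (hp : p ∈ M) (hq : q ∈ M) (h0 : 0 ≤ p) (h : p ≤ q) :
    τ p ≤ τ q := by
  have hadd := hτ.add p (q - p) hp (sub_mem hq hp) h0 (sub_nonneg.2 h)
  rw [add_sub_cancel] at hadd
  exact le_self_add.trans_eq hadd.symm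

lemma isTauFiniteProjection_of_mul_eq (hτ : IsFaithfulSemifiniteTrace M τ)
    (hp : IsTauFiniteProjection M τ p) (hq : q ∈ M) (hq' : IsStarProjection q) (h : p * q = q) :
    IsTauFiniteProjection M τ q :=
  ⟨hq, isProjection_iff.2 hq', (hτ.mono hq hp.1 hq'.nonneg
    (hq'.le_of_mul_eq_right hp.isStarProjection h)).trans_lt hp.2.2⟩

lemma isTauFiniteProjection_zero (hτ : IsFaithfulSemifiniteTrace M τ) :
    IsTauFiniteProjection M τ 0 := by
  refine ⟨zero_mem M, isProjection_iff.2 (.zero _), ?_⟩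
  have h := hτ.smul 0 0 le_rfl (zero_mem M) le_rfl
  rw [smul_zero, ENNReal.ofReal_zero, zero_mul] at h
  exact h.trans_lt ENNReal.zero_lt_top

lemma isTauFiniteProjection_add (hτ : IsFaithfulSemifiniteTrace M τ)
    (hp : IsTauFiniteProjection M τ p) (hq : IsTauFiniteProjection M τ q) (h : p * q = 0) :
    IsTauFiniteProjection M τ (p + q) := by
  refine ⟨add_mem hp.1 hq.1, isProjection_iff.2 (hp.isStarProjection.add hq.isStarProjection h), ?_⟩
  rw [hτ.add p q hp.1 hq.1 hp.isStarProjection.nonneg hq.isStarProjection.nonneg]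
  exact ENNReal.add_lt_top.2 ⟨hp.2.2, hq.2.2⟩

lemma isTauFiniteProjection_rangeProj (hτ : IsFaithfulSemifiniteTrace M τ)
    (hp : IsTauFiniteProjection M τ p) (hx : x ∈ M) (h : x * p = x) :
    IsTauFiniteProjection M τ (rangeProj {x}) := by
  have hpx : p * star x = star x := by
    simpa only [star_mul, hp.isStarProjection.isSelfAdjoint.star_eq] using congr(star $h)
  have hstar : IsTauFiniteProjection M τ (rangeProj {star x}) :=
    hτ.isTauFiniteProjection_of_mul_eq hp (rangeProj_mem (by simpa using star_mem hx))
      (isStarProjection_rangeProj _) (mul_rangeProj_eq_self (by simpa using hpx))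
  obtain ⟨v, hv, hvx, hvx'⟩ := mvNE_rangeProj hx
  refine ⟨rangeProj_mem (by simpa using hx), isProjection_iff.2 (isStarProjection_rangeProj _), ?_⟩
  rw [← hvx', ← hτ.star_mul_self v hv, hvx]
  exact hstar.2.2

lemma exists_isTauFiniteProjection_join (hτ : IsFaithfulSemifiniteTrace M τ)
    (hp : IsTauFiniteProjection M τ p) (hq : IsTauFiniteProjection M τ q) :
    ∃ r, IsTauFiniteProjection M τ r ∧ r * p = p ∧ r * q = q := by
  have hpp : p * p = p := hp.isStarProjection.isIdempotentElem
  have hqq : q * q = q := hq.isStarProjection.isIdempotentElem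
  set r := rangeProj {(1 - p) * q}
  have hr : IsTauFiniteProjection M τ r := hτ.isTauFiniteProjection_rangeProj hq
    (mul_mem (sub_mem (one_mem M) hp.1) hq.1) (by rw [mul_assoc, hqq])
  have hpr : p * r = 0 := mul_rangeProj_eq_zero fun y hy => by
    rw [Set.mem_singleton_iff.1 hy, ← mul_assoc, mul_sub, mul_one, hpp, sub_self, zero_mul]
  have hrp : r * p = 0 := mul_eq_of_mul_eq_of_isSelfAdjoint hp.isStarProjection.isSelfAdjoint
    hr.isStarProjection.isSelfAdjoint (.zero _) hpr
  have hrq : r * q = (1 - p) * q := by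
    have := rangeProj_mul (Set.mem_singleton ((1 - p) * q))
    rwa [← mul_assoc, mul_sub, mul_one, hrp, sub_zero] at this
  refine ⟨p + r, hτ.isTauFiniteProjection_add hp hr hpr, ?_, ?_⟩
  · rw [add_mul, hpp, hrp, add_zero]
  · rw [add_mul, hrq, ← add_mul, add_sub_cancel, one_mul]

lemma exists_isTauFiniteProjection_forall_mul_eq (hτ : IsFaithfulSemifiniteTrace M τ)
    (s : Finset (H →L[ℂ] H)) (hs : ∀ p ∈ s, IsTauFiniteProjection M τ p) :
    ∃ P, IsTauFiniteProjection M τ P ∧ ∀ p ∈ s, P * p = p := by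
  classical
  induction s using Finset.induction_on with
  | empty => exact ⟨0, hτ.isTauFiniteProjection_zero, by simp⟩
  | insert p s _ ih =>
    obtain ⟨P, hP, hPs⟩ := ih fun q hq => hs q (Finset.mem_insert_of_mem hq)
    obtain ⟨r, hr, hrp, hrP⟩ :=
      hτ.exists_isTauFiniteProjection_join (hs p (Finset.mem_insert_self p s)) hP
    refine ⟨r, hr, fun q hq => ?_⟩
    obtain rfl | hq := Finset.mem_insert.1 hq
    · exact hrp
    · rw [← hPs q hq, ← mul_assoc, hrP]

lemma isFiniteProjection (hτ : IsFaithfulSemifiniteTrace M τ) (hp : IsTauFiniteProjection M τ p) :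
    IsFiniteProjection M p := by
  refine ⟨hp.1, hp.2.1, fun q hq hq' hpq hqp => ?_⟩
  obtain ⟨v, hv, rfl, hvp⟩ := hqp
  have hd := (isProjection_iff.1 hq').sub_of_mul_eq_right hp.isStarProjection hpq
  have hadd := hτ.add _ _ hq (sub_mem hp.1 hq) (isProjection_iff.1 hq').nonneg hd.nonneg
  rw [add_sub_cancel, hτ.star_mul_self v hv, hvp] at hadd
  have hzero : τ (p - star v * v) = 0 :=
    ((ENNReal.add_right_inj hp.2.2.ne).1 ((add_zero _).trans hadd)).symm
  exact (sub_eq_zero.1 (hτ.faithful _ (sub_mem hp.1 hq) hd.nonneg hzero)).symm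

lemma exists_isTauFiniteProjection_commute (hτ : IsFaithfulSemifiniteTrace M τ) {e : H →L[ℂ] H}
    (hp : IsTauFiniteProjection M τ p) (he : e ∈ M) (he' : IsStarProjection e) :
    ∃ P, IsTauFiniteProjection M τ P ∧ P * p = p ∧ Commute e P ∧
      ∀ y, IsSelfAdjoint y → Commute y e → Commute y p → Commute y P := by
  have hpp : p * p = p := hp.isStarProjection.isIdempotentElem
  have hep : IsTauFiniteProjection M τ (rangeProj {e * p}) :=
    hτ.isTauFiniteProjection_rangeProj hp (mul_mem he hp.1) (by rw [mul_assoc, hpp])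
  obtain ⟨r, hr, hrp, hrep⟩ := hτ.exists_isTauFiniteProjection_join hp hep
  have hS : ∀ x ∈ ({p, e * p} : Set (H →L[ℂ] H)), r * x = x := by
    rintro _ (rfl | rfl)
    · exact hrp
    · rw [← rangeProj_mul (Set.mem_singleton (e * p)), ← mul_assoc, hrep]
  have heS : ∀ x ∈ ({p, e * p} : Set (H →L[ℂ] H)), rangeProj {p, e * p} * (e * x) = e * x := by
    have hmem : rangeProj {p, e * p} * (e * p) = e * p := rangeProj_mul (by simp)
    rintro _ (rfl | rfl)
    · exact hmem
    · rwa [← mul_assoc e, he'.isIdempotentElem]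
  refine ⟨rangeProj {p, e * p}, hτ.isTauFiniteProjection_of_mul_eq hr (rangeProj_mem ?_)
    (isStarProjection_rangeProj _) (mul_rangeProj_eq_self hS), rangeProj_mul (by simp),
    commute_rangeProj heS (by rwa [he'.isSelfAdjoint.star_eq]), fun y hy hye hyp => ?_⟩
  · rintro _ (rfl | rfl)
    exacts [hp.1, mul_mem he hp.1]
  · have hyS : ∀ x ∈ ({p, e * p} : Set (H →L[ℂ] H)), Commute y x := by
      rintro _ (rfl | rfl)
      exacts [hyp, hye.mul_right hyp]
    exact commute_rangeProj_of_commute hyS (by rwa [hy.star_eq])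

lemma exists_isTauFiniteProjection_forall_commute (hτ : IsFaithfulSemifiniteTrace M τ)
    (hp : IsTauFiniteProjection M τ p) (F : Finset (H →L[ℂ] H))
    (hF : ∀ e ∈ F, e ∈ M ∧ IsStarProjection e)
    (hcomm : ∀ e ∈ F, ∀ f ∈ F, Commute e f) :
    ∃ P, IsTauFiniteProjection M τ P ∧ P * p = p ∧ ∀ e ∈ F, Commute e P := by
  classical
  induction F using Finset.induction_on with
  | empty => exact ⟨p, hp, hp.isStarProjection.isIdempotentElem, by simp⟩
  | insert e F _ ih =>
    have heF := Finset.mem_insert_self e F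
    obtain ⟨P, hP, hPp, hPF⟩ := ih (fun f hf => hF f (Finset.mem_insert_of_mem hf))
      fun f hf g hg => hcomm f (Finset.mem_insert_of_mem hf) g (Finset.mem_insert_of_mem hg)
    obtain ⟨Q, hQ, hQP, hQe, hQcomm⟩ :=
      hτ.exists_isTauFiniteProjection_commute hP (hF e heF).1 (hF e heF).2
    refine ⟨Q, hQ, by rw [← hPp, ← mul_assoc, hQP], fun f hf => ?_⟩
    obtain rfl | hf' := Finset.mem_insert.1 hf
    · exact hQe
    · exact hQcomm f (hF f hf).2.isSelfAdjoint (hcomm f hf e heF) (hPF f hf')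

lemma exists_isTauFiniteProjection_ne_zero (hτ : IsFaithfulSemifiniteTrace M τ) (hq : q ∈ M)
    (hq' : IsStarProjection q) (hq0 : q ≠ 0) :
    ∃ e, IsTauFiniteProjection M τ e ∧ e ≠ 0 ∧ q * e = e := by
  obtain ⟨y, hy, hy0, hyq, hyne, hyτ⟩ := hτ.semifinite q hq hq'.nonneg hq0
  have ht : 0 < ‖y‖ / 2 := half_pos (norm_pos_iff.2 hyne)
  obtain ⟨e, he, hcomm, hge, hle⟩ := exists_isStarProjection_smul_le hy0.isSelfAdjoint (‖y‖ / 2)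
  have heM : e ∈ M := mem_of_forall_commute fun z hz => hcomm z (commute_of_mem_commutant hz hy)
  have hte : 0 ≤ (‖y‖ / 2) • e := smul_nonneg ht.le he.nonneg
  have htey : (‖y‖ / 2) • e ≤ y := by
    have hrest : 0 ≤ y * (1 - e) := ((Commute.one_right y).sub_right
      (hcomm y (Commute.refl y))).mul_nonneg hy0 he.one_sub.nonneg
    calc (‖y‖ / 2) • e ≤ y * e + y * (1 - e) := hge.trans (le_add_of_nonneg_right hrest)
      _ = y := by rw [← mul_add, add_sub_cancel, mul_one]
  refine ⟨e, ⟨heM, isProjection_iff.2 he, ?_⟩, ?_, ?_⟩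
  · have hteM : (‖y‖ / 2) • e ∈ M := by
      rw [RCLike.real_smul_eq_coe_smul (K := ℂ)]
      exact M.toStarSubalgebra.smul_mem heM _
    have hlt := (hτ.mono hteM hy hte htey).trans_lt hyτ
    rw [hτ.smul _ e ht.le heM he.nonneg] at hlt
    exact ENNReal.lt_top_of_mul_ne_top_right hlt.ne (ENNReal.ofReal_pos.2 ht).ne'
  · rintro rfl
    rw [sub_zero, mul_one, ← Algebra.algebraMap_eq_smul_one,
      ← CStarAlgebra.norm_le_iff_le_algebraMap y ht.le hy0] at hle
    linarith
  · have hqe := (hq'.mul_right_and_mul_left_of_nonneg_of_le hte (htey.trans hyq)).2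
    rwa [mul_smul_comm, smul_right_inj ht.ne'] at hqe

end IsFaithfulSemifiniteTrace

/-- The additive group of τ-finitely supported elements of `M`, whose norm closure is
`Kideal M τ`. -/
def tauFinitelySupported (hτ : IsFaithfulSemifiniteTrace M τ) : AddSubgroup (H →L[ℂ] H) where
  carrier := {x | x ∈ M ∧ ∃ p, IsTauFiniteProjection M τ p ∧ p * x = x}
  zero_mem' := ⟨zero_mem M, 0, hτ.isTauFiniteProjection_zero, mul_zero 0⟩
  neg_mem' := by
    rintro x ⟨hx, p, hp, hpx⟩
    exact ⟨neg_mem hx, p, hp, by rw [mul_neg, hpx]⟩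
  add_mem' := by
    rintro x y ⟨hx, p, hp, hpx⟩ ⟨hy, q, hq, hqy⟩
    obtain ⟨r, hr, hrp, hrq⟩ := hτ.exists_isTauFiniteProjection_join hp hq
    refine ⟨add_mem hx hy, r, hr, ?_⟩
    rw [← hpx, ← hqy, mul_add, ← mul_assoc, hrp, ← mul_assoc, hrq]

lemma mem_tauFinitelySupported_of_mul_eq (hτ : IsFaithfulSemifiniteTrace M τ)
    (hp : IsTauFiniteProjection M τ p) (hx : x ∈ M) (h : x * p = x) :
    x ∈ tauFinitelySupported hτ :=
  ⟨hx, rangeProj {x}, hτ.isTauFiniteProjection_rangeProj hp hx h,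
    rangeProj_mul (Set.mem_singleton x)⟩

lemma mul_sub_mul_mem_tauFinitelySupported (hτ : IsFaithfulSemifiniteTrace M τ) {a : H →L[ℂ] H}
    (hp : IsTauFiniteProjection M τ p) (hx : x ∈ M) (h : x * p = x) (ha : a ∈ M) :
    x * a - a * x ∈ tauFinitelySupported hτ := by
  obtain ⟨-, q, hq, hqx⟩ := mem_tauFinitelySupported_of_mul_eq hτ hp hx h
  refine sub_mem ⟨mul_mem hx ha, q, hq, by rw [← mul_assoc, hqx]⟩ ?_
  exact mem_tauFinitelySupported_of_mul_eq hτ hp (mul_mem ha hx) (by rw [mul_assoc, h])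

end Trace

section Comparison

variable {M : VonNeumannAlgebra H} {f q x : H →L[ℂ] H}

lemma exists_isCentralProjection_of_forall_mul_mul_eq_zero (hf : f ∈ M)
    (h : ∀ x ∈ M, q * x * f = 0) : ∃ z, IsCentralProjection M z ∧ z * f = f ∧ q * z = 0 := by
  let S := {y | ∃ x ∈ M, x * f = y}
  have hS {y : H →L[ℂ] H} (hy : y ∈ M) : ∀ x ∈ S, rangeProj S * (y * x) = y * x := by
    rintro _ ⟨x, hx, rfl⟩
    exact rangeProj_mul ⟨y * x, mul_mem hy hx, mul_assoc y x f⟩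
  refine ⟨rangeProj S, ⟨isProjection_iff.2 (isStarProjection_rangeProj S), rangeProj_mem ?_,
    fun y hy => (commute_rangeProj (hS hy) (hS (star_mem hy))).symm.eq⟩,
    rangeProj_mul ⟨1, one_mem M, one_mul f⟩, mul_rangeProj_eq_zero ?_⟩
  · rintro _ ⟨x, hx, rfl⟩
    exact mul_mem hx hf
  · rintro _ ⟨x, hx, rfl⟩
    rw [← mul_assoc, h x hx]

lemma exists_isPartialIsometry_of_mul_mul_ne_zero (hf : f ∈ M) (hf' : IsStarProjection f)
    (hq : q ∈ M) (hq' : IsStarProjection q) (hx : x ∈ M) (h : q * x * f ≠ 0) :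
    ∃ v ∈ M, IsPartialIsometry v ∧ v ≠ 0 ∧ q * v = v ∧ v * f = v := by
  have hq2 : q * q = q := hq'.isIdempotentElem
  have hf2 : f * f = f := hf'.isIdempotentElem
  obtain ⟨v, hv, hvr, hvl⟩ := mvNE_rangeProj (mul_mem (mul_mem hq hx) hf)
  have hvp : IsPartialIsometry v := .of_isStarProjection (hvr ▸ isStarProjection_rangeProj _)
  have hqv : q * (v * star v) = v * star v := by
    rw [hvl]
    exact mul_rangeProj_eq_self (by simp only [Set.mem_singleton_iff, forall_eq, ← mul_assoc, hq2])
  have hfv : f * (star v * v) = star v * v := by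
    rw [hvr]
    exact mul_rangeProj_eq_self (by
      simp only [Set.mem_singleton_iff, forall_eq, star_mul, hf'.isSelfAdjoint.star_eq,
        ← mul_assoc, hf2])
  refine ⟨v, hv, hvp, ?_, ?_, ?_⟩
  · rintro rfl
    rw [zero_mul] at hvl
    have hr := rangeProj_mul (Set.mem_singleton (q * x * f))
    rw [← hvl, zero_mul] at hr
    exact h hr.symm
  · rw [← hvp, ← mul_assoc, hqv]
  · have hvf : star v * v * f = star v * v := mul_eq_of_mul_eq_of_isSelfAdjoint
      hf'.isSelfAdjoint (.star_mul_self v) (.star_mul_self v) hfv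
    conv_lhs => rw [← hvp, mul_assoc v, mul_assoc v, hvf, ← mul_assoc, hvp]

lemma exists_forall_sub_mul_mul_sub_eq_zero (hf : f ∈ M) (hf' : IsStarProjection f)
    (hq : q ∈ M) (hq' : IsStarProjection q) :
    ∃ w ∈ M, q * w = w ∧ w * f = w ∧ ∀ x ∈ M, (q - w * star w) * x * (f - star w * w) = 0 := by
  let r (w w' : H →L[ℂ] H) : Prop := star w * w' = 0 ∧ w * star w' = 0
  have : Std.Symm r := ⟨fun w w' h => ⟨by simpa using congr(star $(h.1)),
    by simpa using congr(star $(h.2))⟩⟩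
  obtain ⟨S, hSP, hSr, hSmax⟩ := exists_maximal_pairwise
    {w | w ∈ M ∧ IsPartialIsometry w ∧ q * w = w ∧ w * f = w} (r := r)
  have hS : IsOrthogonalPartialIsometries fun w : S => (w : H →L[ℂ] H) :=
    ⟨fun w => (hSP w.2).2.1, fun w w' h => (hSr w.2 w'.2 (Subtype.coe_injective.ne h)).1,
      fun w w' h => (hSr w.2 w'.2 (Subtype.coe_injective.ne h)).2⟩
  obtain ⟨W, hW⟩ := hS.exists_hasStrongSum
  have hWM : W ∈ M := hW.mem fun w => (hSP w.2).1
  have hWp := hS.isPartialIsometry_of_hasStrongSum hW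
  have hqW : q * W = W := hW.mul_left_eq_self fun w => (hSP w.2).2.2.1
  have hWf : W * f = W := hW.mul_right_eq_self fun w => (hSP w.2).2.2.2
  refine ⟨W, hWM, hqW, hWf, fun x hx => by_contra fun hne => ?_⟩
  obtain ⟨v, hv, hvp, hv0, hqv, hvf⟩ := exists_isPartialIsometry_of_mul_mul_ne_zero
    (sub_mem hf (mul_mem (star_mem hWM) hWM)) (hWp.isStarProjection_sub_star_mul_self hf' hWf)
    (sub_mem hq (mul_mem hWM (star_mem hWM))) (hWp.isStarProjection_sub_mul_star_self hq' hqW)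
    hx hne
  have hvS : ∀ w ∈ S, r v w := fun w hw =>
    ⟨hS.star_mul_eq_zero_of_sub_mul_eq hW (i := ⟨w, hw⟩) hq'.isSelfAdjoint (hSP hw).2.2.1 hqv,
      hS.mul_star_eq_zero_of_mul_sub_eq hW (i := ⟨w, hw⟩) hf'.isSelfAdjoint (hSP hw).2.2.2 hvf⟩
  have hqv' : q * v = v := by
    rw [← hqv, ← mul_assoc, mul_sub, hq'.isIdempotentElem.eq, ← mul_assoc, hqW]
  have hvf' : v * f = v := by
    rw [← hvf, mul_assoc, sub_mul, hf'.isIdempotentElem.eq, mul_assoc (star W), hWf]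
  have hvv := (hvS v (hSmax v ⟨hv, hvp, hqv', hvf'⟩ hvS)).1
  exact hv0 ((CStarRing.star_mul_self_eq_zero_iff v).1 hvv)

lemma exists_isCentralProjection_mul_mul_star_self_eq (hf : f ∈ M) (hf' : IsStarProjection f)
    (hq : q ∈ M) (hq' : IsStarProjection q) :
    ∃ w ∈ M, q * w = w ∧ w * f = w ∧ ∃ z, IsCentralProjection M z ∧
      z * (w * star w) = z * q ∧ (1 - z) * (star w * w) = (1 - z) * f := by
  obtain ⟨w, hw, hqw, hwf, h⟩ := exists_forall_sub_mul_mul_sub_eq_zero hf hf' hq hq'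
  obtain ⟨z, hz, hzf, hqz⟩ := exists_isCentralProjection_of_forall_mul_mul_eq_zero
    (sub_mem hf (mul_mem (star_mem hw) hw)) h
  refine ⟨w, hw, hqw, hwf, z, hz, ?_, ?_⟩
  · rw [hz.2.2 _ (mul_mem hw (star_mem hw)), hz.2.2 q hq, eq_comm, ← sub_eq_zero, ← sub_mul, hqz]
  · rw [eq_comm, ← sub_eq_zero, ← mul_sub, sub_mul, one_mul, hzf, sub_self]

end Comparison

section Embedding

variable {M : VonNeumannAlgebra H} {τ : (H →L[ℂ] H) → ENNReal} {E f R : H →L[ℂ] H}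

namespace IsFaithfulSemifiniteTrace

lemma isTauFiniteProjection_mul_of_commute (hτ : IsFaithfulSemifiniteTrace M τ) {e : H →L[ℂ] H}
    (hf : IsTauFiniteProjection M τ f) (he : e ∈ M) (he' : IsStarProjection e)
    (hef : Commute e f) : IsTauFiniteProjection M τ (e * f) :=
  hτ.isTauFiniteProjection_of_mul_eq hf (mul_mem he hf.1) (he'.mul hf.isStarProjection hef)
    (by rw [← mul_assoc, ← hef.eq, mul_assoc, hf.isStarProjection.isIdempotentElem.eq])

lemma exists_embedding_mul_eq_zero (hτ : IsFaithfulSemifiniteTrace M τ) (hE : E ∈ M)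
    (hE' : IsStarProjection E)
    (hz : ∀ z, IsCentralProjection M z → IsTauFiniteProjection M τ (z * E) → z * E = 0)
    (hf : IsTauFiniteProjection M τ f) (hEf : E * f = f) (hR : IsTauFiniteProjection M τ R) :
    ∃ w ∈ M, star w * w = f ∧ E * w = w ∧ R * w = 0 := by
  have hEE : E * E = E := hE'.isIdempotentElem
  set R' := rangeProj {E * R}
  have hR' : IsTauFiniteProjection M τ R' := hτ.isTauFiniteProjection_rangeProj hR (mul_mem hE hR.1)
    (by rw [mul_assoc, hR.isStarProjection.isIdempotentElem.eq])
  have hER' : E * R' = R' := mul_rangeProj_eq_self (by simp [← mul_assoc, hEE])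
  have hq : IsStarProjection (E - R') := hR'.isStarProjection.sub_of_mul_eq_right hE' hER'
  have hEq : E * (E - R') = E - R' := by rw [mul_sub, hEE, hER']
  have hqER : (E - R') * (E * R) = 0 := by
    rw [sub_mul, rangeProj_mul (Set.mem_singleton _), ← mul_assoc, hEE, sub_self]
  have hRq : R * (E - R') = 0 := by
    have hstar := congr(star $hqER)
    rwa [star_mul, star_mul, hq.isSelfAdjoint.star_eq, hE'.isSelfAdjoint.star_eq,
      hR.isStarProjection.isSelfAdjoint.star_eq, mul_assoc, hEq, star_zero] at hstar
  obtain ⟨w, hw, hqw, hwf, z, hzc, hzq, hzf⟩ :=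
    exists_isCentralProjection_mul_mul_star_self_eq hf.1 hf.isStarProjection (sub_mem hE hR'.1) hq
  have hz' : IsStarProjection z := isProjection_iff.1 hzc.1
  have hzw : IsTauFiniteProjection M τ (rangeProj {z * w}) :=
    hτ.isTauFiniteProjection_rangeProj hf (mul_mem hzc.2.1 hw) (by rw [mul_assoc, hwf])
  have hzE : z * E = 0 := by
    obtain ⟨P, hP, hPR', hPzw⟩ := hτ.exists_isTauFiniteProjection_join hR' hzw
    refine hz z hzc (hτ.isTauFiniteProjection_of_mul_eq hP (mul_mem hzc.2.1 hE)
      (hz'.mul hE' (hzc.2.2 E hE)) ?_)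
    have hPw : P * (z * w) = z * w := by
      rw [← rangeProj_mul (Set.mem_singleton (z * w)), ← mul_assoc, hPzw]
    have hsum : z * E = R' * z + z * w * star w := by
      rw [mul_assoc, hzq, mul_sub, ← hzc.2.2 R' hR'.1, add_sub_cancel]
    rw [hsum, mul_add, ← mul_assoc, hPR', ← mul_assoc, hPw]
  have hEw : E * w = w := by rw [← hqw, ← mul_assoc, hEq]
  have hzero {x : H →L[ℂ] H} (hx : E * x = x) : z * x = 0 := by
    rw [← hx, ← mul_assoc, hzE, zero_mul]
  refine ⟨w, hw, ?_, hEw, by rw [← hqw, ← mul_assoc, hRq, zero_mul]⟩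
  have hfw : f * star w = star w := by
    simpa only [star_mul, hf.isStarProjection.isSelfAdjoint.star_eq] using congr(star $hwf)
  rwa [sub_mul, sub_mul, one_mul, one_mul, hzero hEf, sub_zero, hzero, sub_zero] at hzf
  rw [← hfw, mul_assoc, ← mul_assoc, hEf]

end IsFaithfulSemifiniteTrace

/-- Commutative rings of operators between the centre of `M` and `M` whose only `τ`-finite
projection is `0`. -/
structure IsTauDiffuse (M : VonNeumannAlgebra H) (τ : (H →L[ℂ] H) → ENNReal)
    (A : Subring (H →L[ℂ] H)) : Prop where
  mem : ∀ x ∈ A, x ∈ M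
  commute : ∀ x ∈ A, ∀ y ∈ A, Commute x y
  mem_of_mem_centerSet : ∀ z ∈ centerSet M, z ∈ A
  eq_zero : ∀ e ∈ A, IsTauFiniteProjection M τ e → e = 0

lemma star_add_mul_add_of_isStarProjection {A : Type*} [Ring A] [StarRing A] {e f u w : A}
    (he : IsStarProjection e) (hw : star w * w = e * f) (hu : star u * u = (1 - e) * f)
    (hew : e * w = w) (heu : (1 - e) * u = u) : star (w + u) * (w + u) = f := by
  have hwu : star w * u = 0 := by
    rw [← hew, ← heu, star_mul, he.isSelfAdjoint.star_eq, mul_assoc, ← mul_assoc e, mul_sub,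
      mul_one, he.isIdempotentElem.eq, sub_self, zero_mul, mul_zero]
  have huw : star u * w = 0 := by
    simpa only [star_mul, star_star, star_zero] using congr(star $hwu)
  rw [star_add, add_mul, mul_add, mul_add, hwu, huw, hw, hu, add_zero, zero_add, ← add_mul,
    add_sub_cancel, one_mul]

namespace IsTauDiffuse

variable {A : Subring (H →L[ℂ] H)}

lemma exists_embedding (hA : IsTauDiffuse M τ A) (hτ : IsFaithfulSemifiniteTrace M τ)
    (hE : E ∈ A) (hE' : IsStarProjection E) (hf : IsTauFiniteProjection M τ f) (hEf : E * f = f)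
    (hR : IsTauFiniteProjection M τ R) : ∃ w ∈ M, star w * w = f ∧ E * w = w ∧ R * w = 0 :=
  hτ.exists_embedding_mul_eq_zero (hA.mem E hE) hE' (fun z hz hzE =>
    hA.eq_zero _ (mul_mem (hA.mem_of_mem_centerSet z hz.2) hE) hzE) hf hEf hR

lemma exists_embedding_forall_commute (hA : IsTauDiffuse M τ A)
    (hτ : IsFaithfulSemifiniteTrace M τ) (hR : IsTauFiniteProjection M τ R)
    (F : Finset (H →L[ℂ] H)) (hF : ∀ e ∈ F, e ∈ A ∧ IsStarProjection e)
    (hE : E ∈ A) (hE' : IsStarProjection E) (hf : IsTauFiniteProjection M τ f) (hEf : E * f = f)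
    (hFf : ∀ e ∈ F, Commute e f) :
    ∃ w ∈ M, star w * w = f ∧ E * w = w ∧ R * w = 0 ∧ ∀ e ∈ F, Commute e w := by
  classical
  induction F using Finset.induction_on generalizing E f with
  | empty => simpa using hA.exists_embedding hτ hE hE' hf hEf hR
  | insert e F _ ih =>
    rw [Finset.forall_mem_insert] at hF hFf
    -- Both corners `e` and `1 - e` are treated alike, and the two partial isometries are added.
    have corner {e : H →L[ℂ] H} (he : e ∈ A) (he' : IsStarProjection e) (hef : Commute e f) :
        ∃ w ∈ M, star w * w = e * f ∧ E * w = w ∧ e * w = w ∧ w * e = w ∧ R * w = 0 ∧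
          ∀ g ∈ F, Commute g w := by
      have hee : e * e = e := he'.isIdempotentElem
      have hEe := hA.commute E hE e he
      have hef' := hτ.isTauFiniteProjection_mul_of_commute hf (hA.mem e he) he' hef
      obtain ⟨w, hw, hwf, hEw, hRw, hFw⟩ := ih hF.2 (mul_mem hE he) (hE'.mul he' hEe) hef'
        (by rw [mul_assoc, ← mul_assoc e, hee, ← mul_assoc, hEe.eq, mul_assoc, hEf])
        fun g hg => (hA.commute g (hF.2 g hg).1 e he).mul_right (hFf.2 g hg)
      refine ⟨w, hw, hwf, ?_, ?_, ?_, hRw, hFw⟩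
      · rw [← hEw, ← mul_assoc, ← mul_assoc, hE'.isIdempotentElem.eq]
      · rw [← hEw, hEe.eq, ← mul_assoc, ← mul_assoc, hee]
      · have hwp : w * star w * w = w := IsPartialIsometry.of_isStarProjection
          (hwf ▸ hef'.isStarProjection)
        rw [← hwp, mul_assoc w, hwf, mul_assoc, mul_assoc, ← hef.eq, ← mul_assoc e, hee]
    obtain ⟨w, hw, hwf, hEw, hew, hwe, hRw, hFw⟩ := corner hF.1.1 hF.1.2 hFf.1
    obtain ⟨u, hu, huf, hEu, heu, hue, hRu, hFu⟩ := corner (sub_mem (one_mem A) hF.1.1)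
      hF.1.2.one_sub ((Commute.one_left f).sub_left hFf.1)
    refine ⟨w + u, add_mem hw hu, star_add_mul_add_of_isStarProjection hF.1.2 hwf huf hew heu,
      by rw [mul_add, hEw, hEu], by rw [mul_add, hRw, hRu, add_zero],
      Finset.forall_mem_insert _ _ _ |>.2 ⟨?_, fun g hg => (hFw g hg).add_right (hFu g hg)⟩⟩
    rw [sub_mul, one_mul, sub_eq_self] at heu
    rw [mul_sub, mul_one, sub_eq_self] at hue
    exact Commute.add_right (hew.trans hwe.symm) (heu.trans hue.symm)

end IsTauDiffuse

end Embedding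

section Approximation

variable {R : Type*} [NormedRing R] [NormedAlgebra ℝ R] {S : Set R}

lemma exists_finset_norm_commutator_le {a : R} (ha : a ∈ closure (Submodule.span ℝ S : Set R))
    {ε : ℝ} (hε : 0 < ε) :
    ∃ F : Finset R, ↑F ⊆ S ∧
      ∀ y, ‖y‖ ≤ 1 → (∀ e ∈ F, Commute e y) → ‖y * a - a * y‖ ≤ ε := by
  obtain ⟨d, hd, had⟩ := Metric.mem_closure_iff.1 ha (ε / 2) (half_pos hε)
  obtain ⟨F, hFS, hdF⟩ := Submodule.mem_span_finite_of_mem_span hd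
  refine ⟨F, hFS, fun y hy hyF => ?_⟩
  have hspan : Submodule.span ℝ (F : Set R) ≤
      Subalgebra.toSubmodule (Subalgebra.centralizer ℝ {y}) :=
    Submodule.span_le.2 fun e he => Subalgebra.mem_centralizer_iff ℝ |>.2 fun _ hz =>
      hz ▸ (hyF e he).eq.symm
  have hyd : Commute y d := Subalgebra.mem_centralizer_iff ℝ |>.1 (hspan hdF) y rfl
  rw [dist_eq_norm] at had
  calc ‖y * a - a * y‖ ≤ 2 * ‖y‖ * ‖a - d‖ := norm_commutator_le_of_commute hyd a
    _ ≤ 2 * 1 * (ε / 2) := by gcongr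
    _ = ε := by ring

lemma exists_seq_finset_norm_commutator_le {ι : Type*} [Countable ι] {a : ι → R}
    (ha : ∀ i, a i ∈ closure (Submodule.span ℝ S : Set R)) :
    ∃ F : ℕ → Finset R, (∀ k, ↑(F k) ⊆ S) ∧ ∀ i, ∃ c : ℕ → ℝ, Summable c ∧
      ∀ k y, ‖y‖ ≤ 1 → (∀ e ∈ F k, Commute e y) → ‖y * a i - a i * y‖ ≤ c k := by
  classical
  have hpos (k : ℕ) : (0 : ℝ) < (1 / 2) ^ k := by positivity
  choose F hFS hF using fun i k => exists_finset_norm_commutator_le (ha i) (hpos k)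
  obtain ⟨ν, hν⟩ := exists_injective_nat ι
  let s (k : ℕ) : Finset ι := (Finset.range (k + 1)).preimage ν hν.injOn
  refine ⟨fun k => (s k).biUnion fun i => F i k, fun k e he => ?_, fun i =>
    ⟨fun k => (1 + 2 * ‖a i‖ * 2 ^ ν i) * (1 / 2) ^ k, summable_geometric_two.mul_left _,
      fun k y hy hyF => ?_⟩⟩
  · obtain ⟨i, -, he⟩ := Finset.mem_biUnion.1 he
    exact hFS i k he
  rcases le_or_gt (ν i) k with hk | hk
  · have his : i ∈ s k := Finset.mem_preimage.2 (Finset.mem_range_succ_iff.2 hk)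
    calc ‖y * a i - a i * y‖ ≤ 1 * (1 / 2) ^ k :=
          (hF i k y hy fun e he => hyF e (Finset.mem_biUnion.2 ⟨i, his, he⟩)).trans_eq
            (one_mul _).symm
      _ ≤ (1 + 2 * ‖a i‖ * 2 ^ ν i) * (1 / 2) ^ k := by
          gcongr
          exact le_add_of_nonneg_right (by positivity)
  · have hpow : (1 : ℝ) ≤ 2 ^ ν i * (1 / 2) ^ k := by
      rw [one_div, inv_pow, ← div_eq_mul_inv, one_le_div (by positivity)]
      exact pow_le_pow_right₀ one_le_two hk.le
    calc ‖y * a i - a i * y‖ ≤ 2 * ‖y‖ * ‖a i - 0‖ :=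
          norm_commutator_le_of_commute (.zero_right y) (a i)
      _ ≤ 2 * 1 * ‖a i‖ * 1 := by rw [sub_zero, mul_one]; gcongr
      _ ≤ 2 * 1 * ‖a i‖ * (2 ^ ν i * (1 / 2) ^ k) := by gcongr
      _ ≤ (1 + 2 * ‖a i‖ * 2 ^ ν i) * (1 / 2) ^ k := by linarith [hpos k]

end Approximation

section Filtration

variable {M : VonNeumannAlgebra H} {τ : (H →L[ℂ] H) → ENNReal}

namespace IsFaithfulSemifiniteTrace

lemma exists_seq_isTauFiniteProjection (hτ : IsFaithfulSemifiniteTrace M τ)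
    (hσ : SigmaFinite M) :
    ∃ p : ℕ → H →L[ℂ] H, (∀ k, IsTauFiniteProjection M τ (p k)) ∧
      ∀ y, (∀ k, y * p k = p k) → y = 1 := by
  let r (p q : H →L[ℂ] H) : Prop := p * q = 0 ∧ q * p = 0
  have : Std.Symm r := ⟨fun _ _ h => h.symm⟩
  obtain ⟨S, hSP, hSr, hSmax⟩ := exists_maximal_pairwise {p | IsTauFiniteProjection M τ p} (r := r)
  have hone : rangeProj S = 1 := by
    by_contra hne
    have hr := isStarProjection_rangeProj S
    obtain ⟨e, he, he0, hre⟩ := hτ.exists_isTauFiniteProjection_ne_zero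
      (sub_mem (one_mem M) (rangeProj_mem fun p hp => (hSP hp).1)) hr.one_sub
      (sub_ne_zero.2 (Ne.symm hne))
    have hpe : ∀ p ∈ S, p * e = 0 := fun p hp => by
      have hp' := (hSP hp).isStarProjection.isSelfAdjoint
      have hpr : p * rangeProj S = p :=
        mul_eq_of_mul_eq_of_isSelfAdjoint hr.isSelfAdjoint hp' hp' (rangeProj_mul hp)
      rw [← hre, ← mul_assoc, mul_sub, mul_one, hpr, sub_self, zero_mul]
    have heS : e ∈ S := hSmax e he fun p hp => ⟨mul_eq_of_mul_eq_of_isSelfAdjoint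
      (hSP hp).isStarProjection.isSelfAdjoint he.isStarProjection.isSelfAdjoint (.zero _)
      (hpe p hp), hpe p hp⟩
    exact he0 (he.isStarProjection.isIdempotentElem.symm.trans (hpe e heS))
  have hcount : S.Countable := by
    refine Set.Countable.of_sdiff (t := {0}) (hσ _ (fun p hp => ?_) fun p hp q hq hpq => ?_)
      (Set.countable_singleton 0)
    · exact ⟨(hSP hp.1).1, (hSP hp.1).2.1, hp.2⟩
    · exact (hSr hp.1 hq.1 hpq).1
  have h0 : (0 : H →L[ℂ] H) ∈ S := hSmax 0 hτ.isTauFiniteProjection_zero fun w _ =>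
    ⟨zero_mul w, mul_zero w⟩
  obtain ⟨p, rfl⟩ := hcount.exists_eq_range ⟨0, h0⟩
  refine ⟨p, fun k => hSP ⟨k, rfl⟩, fun y hy => ?_⟩
  have hyr := mul_rangeProj_eq_self (Set.forall_mem_range.2 hy)
  rwa [hone, mul_one] at hyr

lemma exists_filtration (hτ : IsFaithfulSemifiniteTrace M τ) {p : ℕ → H →L[ℂ] H}
    (hp : ∀ k, IsTauFiniteProjection M τ (p k)) {F : ℕ → Finset (H →L[ℂ] H)}
    (hF : ∀ k, ∀ e ∈ F k, e ∈ M ∧ IsStarProjection e)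
    (hcomm : ∀ k, ∀ e ∈ F k, ∀ f ∈ F k, Commute e f) :
    ∃ P : ℕ → H →L[ℂ] H, (∀ k, IsTauFiniteProjection M τ (P k)) ∧
      (∀ k l, k ≤ l → P l * P k = P k) ∧ (∀ k, P k * p k = p k) ∧
      ∀ k, ∀ e ∈ F k, Commute e (P k) := by
  classical
  obtain ⟨P, hP, hlt⟩ := exists_seq_of_forall_finset (r := fun P Q => Q * P = P)
    (p := fun k P => IsTauFiniteProjection M τ P ∧ P * p k = p k ∧ ∀ e ∈ F k, Commute e P)
    fun k s hs => by
      obtain ⟨Q, hQ, hQs⟩ := hτ.exists_isTauFiniteProjection_forall_mul_eq (insert (p k) s)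
        (Finset.forall_mem_insert _ _ _ |>.2 ⟨hp k, fun P hP => (hs P hP).choose_spec.1⟩)
      obtain ⟨P, hP, hPQ, hPF⟩ := hτ.exists_isTauFiniteProjection_forall_commute hQ (F k) (hF k)
        (hcomm k)
      have hPs : ∀ x ∈ insert (p k) s, P * x = x := fun x hx => by
        rw [← hQs x hx, ← mul_assoc, hPQ]
      exact ⟨P, ⟨hP, hPs _ (Finset.mem_insert_self _ _), hPF⟩, fun x hx =>
        hPs x (Finset.mem_insert_of_mem hx)⟩
  refine ⟨P, fun k => (hP k).1, fun k l hkl => ?_, fun k => (hP k).2.1, fun k => (hP k).2.2⟩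
  obtain rfl | hkl := hkl.eq_or_lt
  exacts [(hP k).1.isStarProjection.isIdempotentElem, hlt k l hkl]

end IsFaithfulSemifiniteTrace

namespace IsTauDiffuse

lemma exists_orthogonal_embeddings {A : Subring (H →L[ℂ] H)} (hA : IsTauDiffuse M τ A)
    (hτ : IsFaithfulSemifiniteTrace M τ) {κ : Type*} [Denumerable κ]
    {f : κ → H →L[ℂ] H} (hf : ∀ i, IsTauFiniteProjection M τ (f i))
    {G : κ → Finset (H →L[ℂ] H)} (hG : ∀ i, ∀ e ∈ G i, e ∈ A ∧ IsStarProjection e)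
    (hGf : ∀ i, ∀ e ∈ G i, Commute e (f i)) :
    ∃ w : κ → H →L[ℂ] H, (∀ i, w i ∈ M) ∧ (∀ i, star (w i) * w i = f i) ∧
      (Pairwise fun i j => star (w i) * w j = 0) ∧ ∀ i, ∀ e ∈ G i, Commute e (w i) := by
  classical
  have hrange : ∀ w ∈ M, ∀ i, star w * w = f i → IsTauFiniteProjection M τ (rangeProj {w}) :=
    fun w hw i hwi => hτ.isTauFiniteProjection_rangeProj (hf i) hw (by
      rw [← hwi, ← mul_assoc]
      exact IsPartialIsometry.of_isStarProjection (hwi ▸ (hf i).isStarProjection))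
  obtain ⟨w, hw, hlt⟩ := exists_seq_of_forall_finset (r := fun w w' => star w * w' = 0)
    (p := fun n w => w ∈ M ∧ star w * w = f (Denumerable.ofNat κ n) ∧
      ∀ e ∈ G (Denumerable.ofNat κ n), Commute e w) fun n s hs => by
      obtain ⟨R, hR, hRs⟩ := hτ.exists_isTauFiniteProjection_forall_mul_eq
        (s.image fun w => rangeProj {w}) (Finset.forall_mem_image.2 fun w hw =>
          let ⟨_, hwM, hwf, _⟩ := hs w hw
          hrange w hwM _ hwf)
      obtain ⟨w, hwM, hwf, -, hRw, hwG⟩ := hA.exists_embedding_forall_commute hτ hR _ (hG _)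
        (one_mem A) (.one _) (hf (Denumerable.ofNat κ n)) (one_mul _) (hGf _)
      refine ⟨w, ⟨hwM, hwf, hwG⟩, fun x hx => ?_⟩
      have hRx : R * x = x := by
        rw [← rangeProj_mul (Set.mem_singleton x), ← mul_assoc,
          hRs _ (Finset.mem_image_of_mem _ hx)]
      rw [← hRx, star_mul, hR.isStarProjection.isSelfAdjoint.star_eq, mul_assoc, hRw, mul_zero]
  have hw' (i : κ) := hw (Encodable.encode i)
  simp only [Denumerable.ofNat_encode] at hw'
  refine ⟨fun i => w (Encodable.encode i), fun i => (hw' i).1, fun i => (hw' i).2.1,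
    fun i j hij => ?_, fun i => (hw' i).2.2⟩
  rcases (Encodable.encode_injective.ne hij).lt_or_gt with h | h
  · exact hlt _ _ h
  · simpa only [star_mul, star_star, star_zero] using congr(star $(hlt _ _ h))

end IsTauDiffuse

end Filtration

section Isometries

lemma IsOrthogonalPartialIsometries.of_star_mul_eq_zero {ι : Type*} {w : ι → H →L[ℂ] H}
    (hw : ∀ i, IsPartialIsometry (w i)) (horth : Pairwise fun i j => star (w i) * w j = 0)
    (hinit : Pairwise fun i j => star (w i) * w i * (star (w j) * w j) = 0) :
    IsOrthogonalPartialIsometries w where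
  isPartialIsometry := hw
  star_mul_eq_zero := horth
  mul_star_eq_zero i j hij :=
    calc w i * star (w j)
        = w i * star (w i) * w i * (star (w j) * w j * star (w j)) := by
          rw [hw i, (hw j).star_mul_mul_star]
      _ = w i * (star (w i) * w i * (star (w j) * w j)) * star (w j) := by simp only [mul_assoc]
      _ = 0 := by rw [hinit hij, mul_zero, zero_mul]

lemma IsOrthogonalPartialIsometries.star_mul_self_eq_one {ι : Type*} {w : ι → H →L[ℂ] H}
    {W : H →L[ℂ] H} (h : IsOrthogonalPartialIsometries w) (hW : HasStrongSum w W)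
    (hone : ∀ y, (∀ i, y * (star (w i) * w i) = star (w i) * w i) → y = 1) : star W * W = 1 :=
  hone _ fun i => by
    have hi : star W * W * star (w i) = star (w i) := by
      simpa only [star_mul, star_star, mul_assoc] using
        congr(star $(h.mul_star_mul_hasStrongSum hW i))
    rw [← mul_assoc, hi]

lemma HasStrongSum.hasSum_commutator {ι : Type*} {w : ι → H →L[ℂ] H} {W a : H →L[ℂ] H}
    (hW : HasStrongSum w W) {c : ι → ℝ} (hc : Summable c)
    (hwc : ∀ i, ‖w i * a - a * w i‖ ≤ c i) :
    HasSum (fun i => w i * a - a * w i) (W * a - a * W) := by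
  have hs := (Summable.of_norm_bounded hc hwc).hasSum
  rwa [(hasStrongSum_of_hasSum hs).unique ((hW.mul_right a).sub (hW.mul_left a))] at hs

variable {M : VonNeumannAlgebra H} {τ : (H →L[ℂ] H) → ENNReal}

lemma IsFaithfulSemifiniteTrace.isTauFiniteProjection_successiveDiff
    (hτ : IsFaithfulSemifiniteTrace M τ) {Q : ℕ → H →L[ℂ] H}
    (hQ : ∀ k, IsTauFiniteProjection M τ (Q k)) (hmono : ∀ k l, k ≤ l → Q l * Q k = Q k) (k : ℕ) :
    IsTauFiniteProjection M τ (successiveDiff Q k) :=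
  hτ.isTauFiniteProjection_of_mul_eq (hQ k)
    (by cases k; exacts [(hQ 0).1, sub_mem (hQ _).1 (hQ _).1])
    (isStarProjection_successiveDiff (fun k => (hQ k).isStarProjection) hmono k)
    (mul_successiveDiff_of_le hmono le_rfl)

lemma IsFaithfulSemifiniteTrace.exists_partition (hτ : IsFaithfulSemifiniteTrace M τ)
    (hσ : SigmaFinite M) {F : ℕ → Finset (H →L[ℂ] H)}
    (hF : ∀ k, ∀ e ∈ F k, e ∈ M ∧ IsStarProjection e)
    (hcomm : ∀ k l, ∀ e ∈ F k, ∀ f ∈ F l, Commute e f) :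
    ∃ f : ℕ → ℕ → H →L[ℂ] H, (∀ j k, IsTauFiniteProjection M τ (f j k)) ∧
      (∀ j, Pairwise fun k l => f j k * f j l = 0) ∧
      (∀ j y, (∀ k, y * f j k = f j k) → y = 1) ∧
      ∀ j k, ∀ e ∈ F (k + j), Commute e (f j k) := by
  classical
  obtain ⟨p, hp, hone⟩ := hτ.exists_seq_isTauFiniteProjection hσ
  -- The difference `P (k + 1) - P k` has to commute with `F (k + 1)`, so `P k` has to as well.
  obtain ⟨P, hP, hmono, hPp, hPF⟩ := hτ.exists_filtration hp (F := fun k => F k ∪ F (k + 1))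
    (fun k e he => (Finset.mem_union.1 he).elim (hF k e) (hF (k + 1) e)) fun k e he f hf => by
      rcases Finset.mem_union.1 he with he | he <;> rcases Finset.mem_union.1 hf with hf | hf <;>
        exact hcomm _ _ e he f hf
  have hshift (j k l : ℕ) (hkl : k ≤ l) : P (l + j) * P (k + j) = P (k + j) :=
    hmono _ _ (Nat.add_le_add_right hkl j)
  refine ⟨fun j => successiveDiff fun k => P (k + j),
    fun j => hτ.isTauFiniteProjection_successiveDiff (fun k => hP _) (hshift j),
    fun j => successiveDiff_mul_eq_zero (fun k => (hP _).isStarProjection) (hshift j),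
    fun j y hy => hone y fun k => ?_, fun j k e he => ?_⟩
  · have hyP : y * P (k + j) = P (k + j) := eq_of_mul_successiveDiff_eq hy k
    have hPpk : P (k + j) * p k = p k := by
      rw [← hPp k, ← mul_assoc, hmono _ _ (Nat.le_add_right k j)]
    rw [← hPpk, ← mul_assoc, hyP]
  · have hself (m : ℕ) (he : e ∈ F m) : Commute e (P m) :=
      hPF m e (Finset.mem_union_left _ he)
    cases k with
    | zero => exact hself _ he
    | succ k =>
      have he' : e ∈ F (k + j + 1) := Nat.add_right_comm k 1 j ▸ he
      exact (hself _ he).sub_right (hPF _ e (Finset.mem_union_right _ he'))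

lemma mem_Kideal_of_hasSum (hτ : IsFaithfulSemifiniteTrace M τ) {ι : Type*} {x : ι → H →L[ℂ] H}
    {y : H →L[ℂ] H} (hx : ∀ i, x i ∈ tauFinitelySupported hτ) (h : HasSum x y) : y ∈ Kideal M τ :=
  mem_closure_of_tendsto h (.of_forall fun _ => (tauFinitelySupported hτ).sum_mem fun i _ => hx i)

lemma IsTauDiffuse.exists_isometries {A : Subring (H →L[ℂ] H)} (hA : IsTauDiffuse M τ A)
    (hτ : IsFaithfulSemifiniteTrace M τ) (hσ : SigmaFinite M) {ι : Type*} [Countable ι]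
    {a : ι → H →L[ℂ] H} (haM : ∀ i, a i ∈ M)
    (ha : ∀ i, a i ∈ closure
      (Submodule.span ℝ {e : H →L[ℂ] H | IsStarProjection e ∧ e ∈ A} : Set (H →L[ℂ] H))) :
    ∃ v : ℕ → H →L[ℂ] H, (∀ j, v j ∈ M) ∧
      (∀ j₁ j₂, star (v j₁) * v j₂ = if j₁ = j₂ then 1 else 0) ∧
      (∀ j i, v j * a i - a i * v j ∈ Kideal M τ) ∧
      ∀ i, Tendsto (fun j => ‖v j * a i - a i * v j‖) atTop (𝓝 0) := by
  obtain ⟨F, hFA, hF⟩ := exists_seq_finset_norm_commutator_le ha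
  choose c hc hFc using hF
  obtain ⟨f, hf, horth, hone, hFf⟩ := hτ.exists_partition hσ
    (fun k e he => ⟨hA.mem e (hFA k he).2, (hFA k he).1⟩)
    fun k l e he g hg => hA.commute e (hFA k he).2 g (hFA l hg).2
  obtain ⟨w, hwM, hwf, hw0, hFw⟩ := hA.exists_orthogonal_embeddings hτ (κ := ℕ × ℕ)
    (fun i => hf i.1 i.2) (G := fun i => F (i.2 + i.1)) (fun i e he => (hFA _ he).symm)
    fun i => hFf i.1 i.2
  have hpw (i : ℕ × ℕ) : IsPartialIsometry (w i) :=
    .of_isStarProjection (hwf i ▸ (hf i.1 i.2).isStarProjection)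
  have hww (j : ℕ) : IsOrthogonalPartialIsometries fun k => w (j, k) :=
    .of_star_mul_eq_zero (fun k => hpw _) (fun k l hkl => hw0 fun h => hkl congr(($h).2))
      fun k l hkl => by simpa only [hwf] using horth j hkl
  choose v hv using fun j => (hww j).exists_hasStrongSum
  have hle (j i k) : ‖w (j, k) * a i - a i * w (j, k)‖ ≤ c i (k + j) :=
    hFc i _ _ (hpw _).norm_le_one (hFw (j, k))
  have hcj (j i) : Summable fun k => c i (k + j) := (summable_nat_add_iff j).2 (hc i)
  have hsum (j i) := (hv j).hasSum_commutator (hcj j i) (hle j i)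
  refine ⟨v, fun j => (hv j).mem fun k => hwM _, fun j₁ j₂ => ?_, fun j i =>
    mem_Kideal_of_hasSum hτ (fun k => mul_sub_mul_mem_tauFinitelySupported hτ (hf j k) (hwM _)
      ((hwf (j, k)).symm ▸ (mul_assoc _ _ _).symm.trans (hpw _)) (haM i)) (hsum j i), fun i => ?_⟩
  · split_ifs with h
    · subst h
      exact (hww j₁).star_mul_self_eq_one (hv j₁) fun y hy => hone j₁ y fun k => hwf (j₁, k) ▸ hy k
    · exact (hv j₁).star_mul_eq_zero (hv j₂) fun k l => hw0 fun hkl => h congr(($hkl).1)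
  · refine squeeze_zero (fun j => norm_nonneg _) (fun j => ?_) (tendsto_sum_nat_add (c i))
    rw [← (hsum j i).tsum_eq]
    exact tsum_of_norm_bounded (hcj j i).hasSum (hle j i)

end Isometries

section DoubleCommutant

variable {M : VonNeumannAlgebra H} {τ : (H →L[ℂ] H) → ENNReal}

lemma isTauDiffuse_centralizer_centralizer {S : Set (H →L[ℂ] H)} (hS : ∀ x ∈ S, x ∈ M)
    (hcomm : ∀ x ∈ S, ∀ y ∈ S, Commute x y)
    (htriv : ∀ e ∈ WZstar M S, IsTauFiniteProjection M τ e → e = 0) :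
    IsTauDiffuse M τ (Subring.centralizer (Set.centralizer (S ∪ centerSet M))) where
  mem x hx := mem_of_forall_commute fun y hy => hx y fun z hz =>
    (commute_of_mem_commutant hy (hz.elim (hS z) And.left)).symm.eq
  commute x hx y hy := by
    refine Set.centralizer_centralizer_comm_of_comm ?_ x hx y hy
    rintro u (hu | hu) v (hv | hv)
    · exact hcomm u hu v hv
    · exact (hv.2 u (hS u hu)).symm
    · exact hu.2 v (hS v hv)
    · exact hu.2 v hv.1
  mem_of_mem_centerSet _ hz := Set.subset_centralizer_centralizer (.inr hz)
  eq_zero := htriv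

end DoubleCommutant

end VNA

open VNA in
theorem statement_14_general {H ι : Type*} [NormedAddCommGroup H] [InnerProductSpace ℂ H]
    [CompleteSpace H] [Countable ι] {M : VonNeumannAlgebra H} (hσ : SigmaFinite M)
    {τ : (H →L[ℂ] H) → ENNReal} (hτ : IsFaithfulSemifiniteTrace M τ)
    {α : ι → H →L[ℂ] H} (hαM : ∀ i, α i ∈ M) (hα : ∀ i, IsSelfAdjoint (α i))
    (hcomm : ∀ i j, Commute (α i) (α j))
    (htriv : ∀ e ∈ WZstar M (Set.range α), IsTauFiniteProjection M τ e → e = 0) :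
    ∃ v : ℕ → H →L[ℂ] H,
      (∀ j, v j ∈ M) ∧
      (∀ j₁ j₂, star (v j₁) * v j₂ = if j₁ = j₂ then 1 else 0) ∧
      (∀ j i, v j * α i - α i * v j ∈ Kideal M τ) ∧
      ∀ i, Tendsto (fun j => ‖v j * α i - α i * v j‖) atTop (𝓝 0) := by
  have hdiffuse := isTauDiffuse_centralizer_centralizer (Set.forall_mem_range.2 hαM)
    (Set.forall_mem_range.2 fun i => Set.forall_mem_range.2 fun j => hcomm i j) htriv
  exact hdiffuse.exists_isometries hτ hσ hαM fun i => mem_closure_span_isStarProjection (hα i)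
    (Set.subset_centralizer_centralizer (.inl ⟨i, rfl⟩))

open VNA in
/-- Existence of a sequence of isometries with pairwise orthogonal ranges
whose commutators with `α` lie in `K(M,τ)` and tend to `0` in norm. -/
theorem statement_14 {H : Type*} [NormedAddCommGroup H] [InnerProductSpace ℂ H]
    [CompleteSpace H] (M : VonNeumannAlgebra H)
    (hM : ProperlyInfinite M) (hσ : SigmaFinite M)
    (τ : (H →L[ℂ] H) → ENNReal) (hτ : IsFNSTrace M τ)
    (n : ℕ) (hn : 0 < n) (α : Fin n → (H →L[ℂ] H))
    (hα : IsCommutingSelfAdjointTuple M α)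
    (htriv : ∀ x ∈ WZstar M (Set.range α), IsFiniteProjection M x → x = 0) :
    ∃ v : ℕ → (H →L[ℂ] H),
      (∀ j, v j ∈ M) ∧
      (∀ j₁ j₂, star (v j₁) * v j₂ = if j₁ = j₂ then 1 else 0) ∧
      (∀ j i, v j * α i - α i * v j ∈ Kideal M τ) ∧
      Filter.Tendsto (fun j => commNorm α (v j)) Filter.atTop (nhds 0) := by
  have hτ' := hτ.isFaithfulSemifiniteTrace
  obtain ⟨v, hvM, hv, hvK, hvlim⟩ := statement_14_general hσ hτ' hα.1 hα.2.1 hα.2.2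
    fun e he hfin => htriv e he (hτ'.isFiniteProjection hfin)
  exact ⟨v, hvM, hv, hvK, tendsto_iSup_zero (fun _ _ => norm_nonneg _) hvlim⟩
end
end
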